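/- In the autonomous case with ω < π², the global attractor 𝒜⁺ of the multivalued semiflow G⁺ generated by the non-negative solutions satisfies 𝒜⁺ ⊂ C^∞([0,1]); that is, every element of 𝒜⁺ is a C^∞ function on [0,1]. -/

import Mathlib

open MeasureTheory Set

noncomputable section

/-- Lebesgue measure restricted to the spatial interval `(0,1)`. -/
def μ01 : Measure ℝ := volume.restrict (Ioo (0:ℝ) 1)

/-- `H = L²(0,1)`. -/
abbrev Hsp : Type := Lp ℝ 2 μ01

/-- The Heaviside multifunction. -/
def heaviside (s : ℝ) : Set ℝ :=
  if s < 0 then {-1} else if s = 0 then Icc (-1) 1 else {1}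

/-- Condition (Cond1). -/
structure Cond1 (b ω : ℝ → ℝ) (b0 b1 ω0 ω1 : ℝ) : Prop where
  contb : Continuous b
  contω : Continuous ω
  b0pos : 0 < b0
  blb : ∀ t, b0 ≤ b t
  bub : ∀ t, b t ≤ b1
  ω0nonneg : 0 ≤ ω0
  ωlb : ∀ t, ω0 ≤ ω t
  ωub : ∀ t, ω t ≤ ω1

/-- `v ∈ H²(0,1) ∩ H¹₀(0,1)` with (weak) second derivative `w ∈ L²(0,1)`:
`v` has a representative that is continuous on `[0,1]`, vanishes at the boundary,
is differentiable on `(0,1)` and whose derivative is an antiderivative of `w`. -/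
def InDomainA (v w : Hsp) : Prop :=
  ∃ vt : ℝ → ℝ, ContinuousOn vt (Icc 0 1) ∧ vt 0 = 0 ∧ vt 1 = 0 ∧
    (∀ᵐ x ∂μ01, vt x = v x) ∧
    ∃ g : ℝ → ℝ,
      (∀ x ∈ Ioo (0:ℝ) 1, HasDerivAt vt (g x) x) ∧
      ∀ x ∈ Ioo (0:ℝ) 1, ∀ y ∈ Ioo (0:ℝ) 1, g x - g y = ∫ z in y..x, w z

/-- A strong solution of the inclusion on `[τ,∞)`, with explicit data:
`r` is the `L²`-selection, `u'` the time derivative, `uxx` the second spatial derivative. -/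
structure IsStrongSolutionWith (b ω : ℝ → ℝ) (τ : ℝ) (u r u' uxx : ℝ → Hsp) : Prop where
  cont : ContinuousOn u (Ici τ)
  rmem : ∀ T, τ < T → MemLp r 2 (volume.restrict (Ioo τ T))
  sel : ∀ᵐ t ∂(volume.restrict (Ioi τ)), ∀ᵐ x ∂μ01,
      ∃ h ∈ heaviside (u t x), r t x = b t * h + ω t * u t x
  dom : ∀ᵐ t ∂(volume.restrict (Ioi τ)), InDomainA (u t) (uxx t)
  eq : ∀ᵐ t ∂(volume.restrict (Ioi τ)), u' t = r t + uxx t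
  fund : ∀ T1 T2 : ℝ, τ < T1 → T1 < T2 →
      IntervalIntegrable u' volume T1 T2 ∧
      ∀ t ∈ Icc T1 T2, u t = u T1 + ∫ s in T1..t, u' s

/-- A strong solution of the inclusion on `[τ,∞)`. -/
def IsStrongSolution (b ω : ℝ → ℝ) (τ : ℝ) (u : ℝ → Hsp) : Prop :=
  ∃ r u' uxx, IsStrongSolutionWith b ω τ u r u' uxx

/-- The solution is non-negative on `[τ,∞)`. -/
def NonnegOn (u : ℝ → Hsp) (τ : ℝ) : Prop :=
  ∀ t, τ ≤ t → ∀ᵐ x ∂μ01, 0 ≤ u t x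

/-- `v` is positive: it has a continuous representative on `[0,1]`
which is strictly positive on `(0,1)`. -/
def IsPositive (v : Hsp) : Prop :=
  ∃ vt : ℝ → ℝ, ContinuousOn vt (Icc 0 1) ∧ (∀ᵐ x ∂μ01, vt x = v x) ∧
    ∀ x ∈ Ioo (0:ℝ) 1, 0 < vt x


/-- The positive cone `H⁺` of `H = L²(0,1)`. -/
def Hplus : Set Hsp := {v : Hsp | ∀ᵐ x ∂μ01, 0 ≤ v x}

/-- The multivalued semiflow of non-negative solutions of the autonomous problem
applied to a set: `G⁺(t,S) = {u(t) : u ∈ 𝒟⁺(u₀), u₀ ∈ S}`. -/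
def autGplus (b ω : ℝ) (t : ℝ) (S : Set Hsp) : Set Hsp :=
  {y | ∃ u : ℝ → Hsp, u 0 ∈ S ∧
        IsStrongSolution (fun _ => b) (fun _ => ω) 0 u ∧ NonnegOn u 0 ∧ y = u t}

/-- `𝒜⁺` is the global attractor of the autonomous multivalued semiflow `G⁺` on
the positive cone: compact, strictly invariant, attracting bounded subsets of `H⁺`. -/
structure IsGlobalAttractorPlus (b ω : ℝ) (𝒜 : Set Hsp) : Prop where
  subset : 𝒜 ⊆ Hplus
  compact : IsCompact 𝒜
  invariant : ∀ t : ℝ, 0 ≤ t → autGplus b ω t 𝒜 = 𝒜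
  attracting : ∀ B : Set Hsp, B ⊆ Hplus → Bornology.IsBounded B → ∀ ε > (0:ℝ),
    ∃ T : ℝ, ∀ t, T ≤ t → ∀ y ∈ autGplus b ω t B, ∃ a ∈ 𝒜, ‖y - a‖ < ε

section Helpers
open Filter Topology

/-- Fourier coefficients of the finite triple product. -/
def tpc (q : ℝ) : ℕ → ℤ → ℝ
  | 0, k => if k = 0 then 1 else 0
  | N+1, k => (1 + (q^(2*N+1))^2) * tpc q N k + q^(2*N+1) * (tpc q N (k-1) + tpc q N (k+1))

def tpP (q : ℝ) (N : ℕ) (z : ℝ) : ℝ :=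
  ∏ n ∈ Finset.range N, (1 + 2 * q^(2*n+1) * Real.cos (Real.pi * z) + (q^(2*n+1))^2)

lemma tpc_nonneg {q : ℝ} (hq : 0 < q) (N : ℕ) (k : ℤ) : 0 ≤ tpc q N k := by
  induction N generalizing k with
  | zero => simp only [tpc]; split_ifs <;> norm_num
  | succ N ih =>
    simp only [tpc]
    have := ih k; have := ih (k-1); have := ih (k+1)
    positivity

lemma tpc_neg (q : ℝ) (N : ℕ) (k : ℤ) : tpc q N (-k) = tpc q N k := by
  induction N generalizing k with
  | zero => simp [tpc]
  | succ N ih =>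
    simp only [tpc]
    rw [ih k, show -k - 1 = -(k+1) by ring, show -k+1 = -(k-1) by ring, ih, ih]
    ring

lemma tpc_zero_pos {q : ℝ} (hq : 0 < q) (N : ℕ) : 0 < tpc q N 0 := by
  induction N with
  | zero => simp [tpc]
  | succ N ih =>
    simp only [tpc]
    have := tpc_nonneg hq N (0-1); have := tpc_nonneg hq N (0+1)
    positivity

lemma hasSum_congr2 {ι : Type*} {f g : ι → ℝ} {a b : ℝ} (h : HasSum f a) (hf : ∀ k, g k = f k) (ha : b = a) :
    HasSum g b := by
  rw [ha, show g = f from funext hf]; exact h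

lemma tpc_hasSum (q : ℝ) (N : ℕ) (z : ℝ) :
    HasSum (fun k : ℤ => tpc q N k * Real.cos (k * (Real.pi * z))) (tpP q N z) := by
  have main : ∀ w, w = Real.pi * z → (HasSum (fun k : ℤ => tpc q N k * Real.cos (k * w)) (tpP q N z) ∧
      HasSum (fun k : ℤ => tpc q N k * Real.sin (k * w)) 0) := by
    intro w hw
    induction N with
    | zero =>
      simp only [tpc, tpP, Finset.range_zero, Finset.prod_empty]
      constructor
      · convert hasSum_ite_eq (0:ℤ) (1:ℝ) using 2 with k
        split_ifs with h <;> simp [h]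
      · convert hasSum_zero using 2 with k
        split_ifs with h <;> simp [h]
    | succ N ih =>
      obtain ⟨hc, hs⟩ := ih
      have e1 := (Equiv.subRight (1:ℤ)).hasSum_iff (f := fun k : ℤ => tpc q N k * Real.cos ((k+1:ℤ) * w))
        (a := Real.cos w * tpP q N z - Real.sin w * 0)
      have e2 := (Equiv.addRight (1:ℤ)).hasSum_iff (f := fun k : ℤ => tpc q N k * Real.cos ((k-1:ℤ) * w))
        (a := Real.cos w * tpP q N z + Real.sin w * 0)
      have e3 := (Equiv.subRight (1:ℤ)).hasSum_iff (f := fun k : ℤ => tpc q N k * Real.sin ((k+1:ℤ) * w))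
        (a := Real.cos w * 0 + Real.sin w * tpP q N z)
      have e4 := (Equiv.addRight (1:ℤ)).hasSum_iff (f := fun k : ℤ => tpc q N k * Real.sin ((k-1:ℤ) * w))
        (a := Real.cos w * 0 - Real.sin w * tpP q N z)
      have h1 := e1.2 (by
        refine hasSum_congr2 ((hc.mul_left (Real.cos w)).sub (hs.mul_left (Real.sin w))) (fun k => ?_) rfl
        push_cast; rw [add_mul, one_mul, Real.cos_add]; ring)
      have h2 := e2.2 (by
        refine hasSum_congr2 ((hc.mul_left (Real.cos w)).add (hs.mul_left (Real.sin w))) (fun k => ?_) rfl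
        push_cast; rw [sub_mul, one_mul, Real.cos_sub]; ring)
      have h3 := e3.2 (by
        refine hasSum_congr2 ((hs.mul_left (Real.cos w)).add (hc.mul_left (Real.sin w))) (fun k => ?_) rfl
        push_cast; rw [add_mul, one_mul, Real.sin_add]; ring)
      have h4 := e4.2 (by
        refine hasSum_congr2 ((hs.mul_left (Real.cos w)).sub (hc.mul_left (Real.sin w))) (fun k => ?_) rfl
        push_cast; rw [sub_mul, one_mul, Real.sin_sub]; ring)
      constructor
      · refine hasSum_congr2 ((hc.mul_left (1 + (q^(2*N+1))^2)).add ((h1.add h2).mul_left (q^(2*N+1)))) (fun k => ?_) ?_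
        · simp only [tpc, Function.comp, Equiv.subRight_apply, Equiv.coe_addRight, sub_add_cancel, add_sub_cancel_right]
          ring
        · rw [tpP, Finset.prod_range_succ, ← tpP, ← hw]; ring
      · refine hasSum_congr2 ((hs.mul_left (1 + (q^(2*N+1))^2)).add ((h3.add h4).mul_left (q^(2*N+1)))) (fun k => ?_) ?_
        · simp only [tpc, Function.comp, Equiv.subRight_apply, Equiv.coe_addRight, sub_add_cancel, add_sub_cancel_right]
          ring
        · ring
  exact (main _ rfl).1

lemma tpc_rel {q : ℝ} (hq : 0 < q) (N : ℕ) (k : ℤ) :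
    tpc q N (k+1) * (1 - (q^k)^2 * (q^N)^2 * q^2) = q * ((q^k)^2 - (q^N)^2) * tpc q N k := by
  induction N generalizing k with
  | zero =>
    simp only [tpc]
    by_cases h0 : k = 0
    · subst h0; simp
    · by_cases h1 : k = -1
      · subst h1; simp; field_simp; norm_num
      · rw [if_neg (by omega), if_neg h0]; ring
  | succ N ih =>
    have a := ih (k-1)
    have b := ih k
    have c := ih (k+1)
    simp only [tpc]
    rw [zpow_sub_one₀ hq.ne', sub_add_cancel] at a
    rw [zpow_add_one₀ hq.ne'] at c
    rw [show k+1-1 = k by ring]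
    have hN : q^(2*N+1) = (q^N)^2 * q := by ring
    have hN1 : q^(N+1) = q^N * q := by ring
    rw [hN, hN1]
    have hX : 0 < q^k := by positivity
    have hY : 0 < q^N := by positivity
    generalize q^k = X at *
    generalize q^N = Y at *
    field_simp at a
    linear_combination Y^2*q*c + (1+q^4*Y^4)*b + Y^2*q^2*a

lemma tpc_succ {q : ℝ} (hq : 0 < q) (hq1 : q < 1) (N k : ℕ) :
    tpc q N (k+1:ℕ) = q^(2*k+1) * ((1 - q^(2*N) / q^(2*k)) / (1 - q^(2*N+2*k+2))) * tpc q N k := by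
  have h := tpc_rel hq N k
  have h1 : q^(2*N+2*k+2) < 1 := pow_lt_one₀ hq.le hq1 (by omega)
  have h2 : 1 - q^(2*N+2*k+2) ≠ 0 := by linarith
  push_cast
  have e : 1 - q^(2*N+2*k+2) = 1 - (q^(k:ℤ))^2 * (q^N)^2 * q^2 := by
    rw [zpow_natCast]; ring
  have : tpc q N (k+1) = q * ((q^(k:ℤ))^2 - (q^N)^2) * tpc q N k / (1 - q^(2*N+2*k+2)) := by
    rw [eq_div_iff h2, e]; exact h
  rw [this, zpow_natCast]
  have : 0 < q^k := by positivity
  have e3 : q^(2*k+1) = (q^k)^2*q := by ring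
  have e4 : q^(2*k) = (q^k)^2 := by ring
  have e5 : q^(2*N) = (q^N)^2 := by ring
  rw [e3, e4, e5]
  field_simp

lemma tpc_zero_of_gt {q : ℝ} (N : ℕ) (k : ℤ) (h : (N:ℤ) < |k|) : tpc q N k = 0 := by
  induction N generalizing k with
  | zero => simp only [tpc]; rw [if_neg]; rintro rfl; simp at h
  | succ N ih =>
    simp only [tpc]
    push_cast at h
    have a1 : (N:ℤ) < |k-1| := by have := abs_sub_abs_le_abs_sub k 1; simp at this; omega
    have a2 : (N:ℤ) < |k+1| := by have := abs_sub_abs_le_abs_sub k (-1); simp at this; omega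
    rw [ih k (by omega), ih (k-1) a1, ih (k+1) a2]; ring

lemma tpc_le {q : ℝ} (hq : 0 < q) (hq1 : q < 1) (N k : ℕ) :
    tpc q N k ≤ tpc q N 0 * q^(k^2) := by
  induction k with
  | zero => simp
  | succ k ih =>
    by_cases hk : N < k + 1
    · rw [tpc_zero_of_gt N _ (by rw [abs_of_nonneg (by positivity)]; exact_mod_cast hk)]
      have := tpc_zero_pos hq N; positivity
    · rw [tpc_succ hq hq1]
      have h1 : q^(2*N+2*k+2) < 1 := pow_lt_one₀ hq.le hq1 (by omega)
      have h2 : q^(2*N) / q^(2*k) ≤ 1 := by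
        rw [div_le_one (by positivity)]
        exact pow_le_pow_of_le_one hq.le hq1.le (by omega)
      have h3 : q^(2*N+2*k+2) ≤ q^(2*N) / q^(2*k) := by
        rw [le_div_iff₀ (by positivity), ← pow_add]
        exact pow_le_pow_of_le_one hq.le hq1.le (by omega)
      have h4 : (1 - q^(2*N) / q^(2*k)) / (1 - q^(2*N+2*k+2)) ≤ 1 := by
        rw [div_le_one (by linarith)]; linarith
      have h5 : 0 ≤ (1 - q^(2*N) / q^(2*k)) / (1 - q^(2*N+2*k+2)) :=
        div_nonneg (by linarith) (by linarith)
      have h0 := tpc_nonneg hq N k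
      calc _ ≤ q^(2*k+1) * 1 * tpc q N k := by gcongr
        _ ≤ q^(2*k+1) * 1 * (tpc q N 0 * q^(k^2)) := by gcongr
        _ = _ := by ring

lemma tpc_tendsto {q : ℝ} (hq : 0 < q) (hq1 : q < 1) (k : ℕ) :
    Tendsto (fun N => tpc q N k / tpc q N 0) atTop (𝓝 (q^(k^2))) := by
  have hz : Tendsto (fun N : ℕ => q^(2*N)) atTop (𝓝 0) := by
    simp_rw [pow_mul]
    exact tendsto_pow_atTop_nhds_zero_of_lt_one (by positivity) (by nlinarith)
  induction k with
  | zero =>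
    have : ∀ N, tpc q N 0 / tpc q N 0 = 1 := fun N => div_self (tpc_zero_pos hq N).ne'
    simp [this]
  | succ k ih =>
    have e : ∀ N, tpc q N (k+1:ℕ) / tpc q N 0 =
      q^(2*k+1) * ((1 - q^(2*N) / q^(2*k)) / (1 - q^(2*N) * q^(2*k+2))) * (tpc q N k / tpc q N 0) := by
      intro N; rw [tpc_succ hq hq1, add_assoc (2*N), pow_add q (2*N)]; ring
    simp_rw [e]
    have := ((((hz.div_const (q^(2*k))).const_sub 1).div ((hz.mul_const (q^(2*k+2))).const_sub 1) (by simp)).const_mul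
      (q^(2*k+1))).mul ih
    refine this.congr' (Eventually.of_forall fun N => rfl) |>.trans (le_of_eq ?_)
    congr 1
    simp; ring

def thetaR (q z : ℝ) : ℝ := ∑' k : ℤ, q^(k.natAbs^2) * Real.cos (k * (Real.pi * z))

lemma theta_summable {q : ℝ} (hq : 0 < q) (hq1 : q < 1) : Summable (fun k : ℤ => q^(k.natAbs^2)) := by
  have : Summable (fun k : ℕ => q^(k^2)) := by
    refine Summable.of_nonneg_of_le (fun _ => by positivity) (fun k => ?_) (summable_geometric_of_lt_one hq.le hq1)
    exact pow_le_pow_of_le_one hq.le hq1.le (by nlinarith [Nat.zero_le k, Nat.le_self_pow (two_ne_zero) k])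
  refine Summable.of_nat_of_neg ?_ ?_ <;> simpa using this

lemma tpc_natAbs (q : ℝ) (N : ℕ) (k : ℤ) : tpc q N k = tpc q N (k.natAbs : ℤ) := by
  rcases Int.natAbs_eq k with h | h
  · rw [← h]
  · conv_lhs => rw [h]
    rw [tpc_neg]

lemma tpP_tendsto {q : ℝ} (hq : 0 < q) (hq1 : q < 1) (z : ℝ) :
    Tendsto (fun N => tpP q N z / tpc q N 0) atTop (𝓝 (thetaR q z)) := by
  have e : ∀ N, tpP q N z / tpc q N 0 = ∑' k : ℤ, tpc q N k / tpc q N 0 * Real.cos (k * (Real.pi * z)) := by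
    intro N
    rw [← ((tpc_hasSum q N z).div_const _).tsum_eq]
    congr 1; ext k; ring
  simp_rw [e]
  refine tendsto_tsum_of_dominated_convergence (theta_summable hq hq1) (fun k => ?_) (Eventually.of_forall fun N k => ?_)
  · refine Tendsto.mul_const _ ?_
    simp_rw [tpc_natAbs q _ k]
    exact tpc_tendsto hq hq1 _
  · rw [norm_mul, Real.norm_eq_abs, Real.norm_eq_abs]
    have h0 := tpc_zero_pos hq N
    have : |tpc q N k / tpc q N 0| ≤ q^(k.natAbs^2) := by
      rw [abs_of_nonneg (div_nonneg (tpc_nonneg hq _ _) h0.le), div_le_iff₀ h0, tpc_natAbs, mul_comm]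
      exact tpc_le hq hq1 _ _
    calc _ ≤ q^(k.natAbs^2) * 1 := by gcongr; exact Real.abs_cos_le_one _
      _ = _ := mul_one _

lemma tpfac_pos {x c : ℝ} (hx : 0 < x) (_hx1 : x < 1) (hc : -1 ≤ c) : (1-x)^2 ≤ 1 + 2 * x * c + x^2 := by
  nlinarith

lemma theta_pos {q : ℝ} (hq : 0 < q) (hq1 : q < 1) (z : ℝ) : 0 < thetaR q z := by
  set C := 1 / (1-q) + 1
  have hC : 0 < C := by have : 0 < 1 - q := by linarith
                        positivity
  set κ := Real.exp (-(2 * C * (1/(1-q))))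
  have hsum : ∀ N, ∑ n ∈ Finset.range N, q^(2*n+1) ≤ 1/(1-q) := by
    intro N
    have h1 : ∑ n ∈ Finset.range N, q^(2*n+1) ≤ ∑ n ∈ Finset.range N, q^n :=
      Finset.sum_le_sum fun n _ => pow_le_pow_of_le_one hq.le hq1.le (by omega)
    have h2 := (summable_geometric_of_lt_one hq.le hq1).sum_le_tsum (Finset.range N) (fun _ _ => by positivity)
    rw [tsum_geometric_of_lt_one hq.le hq1, ← one_div] at h2
    linarith
  have hfac : ∀ n : ℕ, Real.exp (-(2*C*q^(2*n+1))) * (1 + 2*q^(2*n+1) * Real.cos (Real.pi*0) + (q^(2*n+1))^2)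
      ≤ 1 + 2*q^(2*n+1) * Real.cos (Real.pi*z) + (q^(2*n+1))^2 := by
    intro n
    have hx : 0 < q^(2*n+1) := by positivity
    have hxq : q^(2*n+1) ≤ q := by
      conv_rhs => rw [← pow_one q]
      exact pow_le_pow_of_le_one hq.le hq1.le (by omega)
    generalize q^(2*n+1) = x at *
    have h1 := tpfac_pos hx (by linarith) (Real.neg_one_le_cos (Real.pi*z))
    have h2 : Real.exp (-(C*x)) * (1 + x) ≤ 1 - x := by
      have a1 : 1 + x ≤ Real.exp x := by linarith [Real.add_one_le_exp x]
      have a2 : (1 - x)⁻¹ ≤ Real.exp (x/(1-q)) := by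
        have b1 : (1-x)⁻¹ ≤ 1 + x/(1-q) := by
          have : (1-x)⁻¹ = 1 + x/(1-x) := by field_simp [(by linarith : (1-x) ≠ 0)]; try ring
          rw [this]; gcongr
        linarith [Real.add_one_le_exp (x/(1-q))]
      have a3 : Real.exp (-(x/(1-q))) ≤ 1 - x := by
        rw [Real.exp_neg]; exact inv_le_of_inv_le₀ (by linarith) a2
      calc _ ≤ Real.exp (-(C*x)) * Real.exp x := by gcongr
        _ = Real.exp (-(x/(1-q))) := by rw [← Real.exp_add]; congr 1; simp only [C]; ring
        _ ≤ _ := a3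
    have h3 : (Real.exp (-(C*x)) * (1 + x))^2 ≤ (1-x)^2 := by gcongr
    have h4 : Real.exp (-(2*C*x)) = Real.exp (-(C*x))^2 := by
      rw [← Real.exp_nat_mul]; congr 1; push_cast; ring
    rw [h4]; simp only [mul_zero, Real.cos_zero]
    nlinarith
  have hP : ∀ N, κ ≤ tpP q N z / tpc q N 0 := by
    intro N
    have h0 := tpc_zero_pos hq N
    have hP0 : tpc q N 0 ≤ tpP q N 0 := by
      have := (tpc_hasSum q N 0)
      have h := this.summable.le_tsum (0:ℤ) (fun j _ => by simpa using tpc_nonneg hq N j)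
      rw [this.tsum_eq] at h; simpa using h
    rw [le_div_iff₀ h0]
    have : Real.exp (-(2*C*∑ n ∈ Finset.range N, q^(2*n+1))) * tpP q N 0 ≤ tpP q N z := by
      rw [Finset.mul_sum, ← Finset.sum_neg_distrib, Real.exp_sum, tpP, ← Finset.prod_mul_distrib]
      apply Finset.prod_le_prod
      · intro n _
        have hx : 0 < q^(2*n+1) := by positivity
        simp only [mul_zero, Real.cos_zero]; positivity
      · intro n _; exact hfac n
    refine le_trans ?_ this
    have hk : κ ≤ Real.exp (-(2*C*∑ n ∈ Finset.range N, q^(2*n+1))) := by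
      simp only [κ]; gcongr; exact hsum N
    exact mul_le_mul hk hP0 h0.le (Real.exp_pos _).le
  exact lt_of_lt_of_le (Real.exp_pos _) (ge_of_tendsto' (tpP_tendsto hq hq1 z) hP)

lemma theta_lt {q : ℝ} (hq : 0 < q) (hq1 : q < 1) {a b : ℝ} (ha : 0 ≤ a) (hab : a < b) (hb : b ≤ 1) :
    thetaR q b < thetaR q a := by
  have hcos : Real.cos (Real.pi*b) < Real.cos (Real.pi * a) := by
    apply Real.cos_lt_cos_of_nonneg_of_le_pi
    · positivity
    · nlinarith [Real.pi_pos]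
    · nlinarith [Real.pi_pos]
  set fa := 1 + 2 * q * Real.cos (Real.pi * a) + q^2
  set fb := 1 + 2 * q * Real.cos (Real.pi * b) + q^2
  have hfb : 0 < fb := lt_of_lt_of_le (by nlinarith) (tpfac_pos hq hq1 (Real.neg_one_le_cos _))
  have hlt : fb < fa := by simp only [fa, fb]; nlinarith
  have hkey : ∀ N, tpP q (N+1) b / tpc q (N+1) 0 ≤ fb / fa * (tpP q (N+1) a / tpc q (N+1) 0) := by
    intro N
    have h0 := tpc_zero_pos hq (N+1)
    have hR : ∏ n ∈ Finset.range N, (1 + 2 * q^(2*(n+1)+1) * Real.cos (Real.pi * b) + (q^(2*(n+1)+1))^2)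
       ≤ ∏ n ∈ Finset.range N, (1 + 2 * q^(2*(n+1)+1) * Real.cos (Real.pi * a) + (q^(2*(n+1)+1))^2) := by
      apply Finset.prod_le_prod
      · intro n _
        have hx : 0 < q^(2*(n+1)+1) := by positivity
        have hx1 : q^(2*(n+1)+1) < 1 := pow_lt_one₀ hq.le hq1 (by omega)
        exact le_trans (sq_nonneg _) (tpfac_pos hx hx1 (Real.neg_one_le_cos _))
      · intro n _
        have hx : 0 < q^(2*(n+1)+1) := by positivity
        nlinarith
    rw [← mul_div_assoc]
    gcongr
    rw [tpP, Finset.prod_range_succ', tpP, Finset.prod_range_succ']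
    have e : ∀ c, (1 + 2 * q ^ (2*0+1) * c + (q^(2*0+1))^2) = 1 + 2 * q * c + q^2 := by intro c; ring
    rw [e, e]
    change _ * fb ≤ fb / fa * (_ * fa)
    have : fa ≠ 0 := by linarith
    refine (mul_le_mul_of_nonneg_right hR hfb.le).trans (le_of_eq ?_)
    generalize ∏ n ∈ Finset.range N, (1 + 2 * q^(2*(n+1)+1) * Real.cos (Real.pi * a) + (q^(2*(n+1)+1))^2) = R
    field_simp
  have h1 := (tendsto_add_atTop_iff_nat 1).2 (tpP_tendsto hq hq1 b)
  have h2 := (tendsto_add_atTop_iff_nat 1).2 (tpP_tendsto hq hq1 a)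
  have h3 := le_of_tendsto_of_tendsto' h1 (h2.const_mul (fb/fa)) hkey
  have h4 := theta_pos hq hq1 a
  have h5 : fb / fa < 1 := (div_lt_one (by linarith)).2 hlt
  nlinarith

lemma theta_hasSum {q : ℝ} (hq : 0 < q) (hq1 : q < 1) (z : ℝ) :
    HasSum (fun n : ℕ => 2 * q^((n+1)^2) * Real.cos ((n+1:ℕ) * (Real.pi * z))) (thetaR q z - 1) := by
  have hs : Summable (fun k : ℤ => q^(k.natAbs^2) * Real.cos (k * (Real.pi * z))) := by
    refine Summable.of_norm_bounded (theta_summable hq hq1) fun k => ?_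
    rw [norm_mul, Real.norm_eq_abs, Real.norm_eq_abs, abs_of_pos (by positivity)]
    exact mul_le_of_le_one_right (by positivity) (Real.abs_cos_le_one _)
  have h := hs.hasSum.nat_add_neg
  rw [← hasSum_nat_add_iff' 1] at h
  refine hasSum_congr2 h (fun k => ?_) ?_
  · have e : ((-((k+1:ℕ):ℤ):ℤ):ℝ) = -((k+1:ℕ):ℝ) := by push_cast; ring
    simp only [Int.natAbs_neg, Int.natAbs_natCast, e, neg_mul, Real.cos_neg, Int.cast_natCast]
    ring
  · simp [thetaR]

/-- kernel positivity -/
lemma kernel_pos {q : ℝ} (hq : 0 < q) (hq1 : q < 1) {x y : ℝ} (hx : x ∈ Ioo (0:ℝ) 1) (hy : y ∈ Ioo (0:ℝ) 1) :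
    0 < ∑' n : ℕ, q^((n+1)^2) * (Real.sin ((n+1:ℕ) * (Real.pi * x)) * Real.sin ((n+1:ℕ) * (Real.pi * y))) := by
  have h := ((theta_hasSum hq hq1 (x-y)).sub (theta_hasSum hq hq1 (x+y))).div_const 4
  have h2 : HasSum (fun n : ℕ => q^((n+1)^2) * (Real.sin ((n+1:ℕ) * (Real.pi * x)) * Real.sin ((n+1:ℕ) * (Real.pi * y))))
      ((thetaR q (x-y) - 1 - (thetaR q (x+y) - 1))/4) := by
    refine hasSum_congr2 h (fun k => ?_) rfl
    rw [mul_sub, mul_sub, mul_add, mul_add, Real.cos_sub, Real.cos_add]; ring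
  rw [h2.tsum_eq]
  have hneg : ∀ z, thetaR q (-z) = thetaR q z := by
    intro z; simp only [thetaR, mul_neg, Real.cos_neg]
  have hper : ∀ z, thetaR q (2 - z) = thetaR q z := by
    intro z; simp only [thetaR]
    congr 1; ext k
    rw [show (k:ℝ) * (Real.pi * (2-z)) = k * (2*Real.pi) - k * (Real.pi * z) by ring, Real.cos_int_mul_two_pi_sub]
  have e1 : thetaR q (x-y) = thetaR q |x-y| := by
    rcases abs_choice (x-y) with h | h <;> rw [h]
    rw [hneg]
  obtain ⟨hx0, hx1⟩ := hx
  obtain ⟨hy0, hy1⟩ := hy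
  have : thetaR q (x+y) < thetaR q (x-y) := by
    rw [e1]
    by_cases h1 : x + y ≤ 1
    · exact theta_lt hq hq1 (abs_nonneg _) (by rw [abs_lt]; constructor <;> linarith) h1
    · rw [← hper (x+y)]
      exact theta_lt hq hq1 (abs_nonneg _) (by rw [abs_lt]; constructor <;> linarith) (by linarith)
  linarith

instance : IsFiniteMeasure μ01 := by unfold μ01; infer_instance

def sinf (n : ℕ) (x : ℝ) : ℝ := √2 * Real.sin ((n+1:ℕ) * (Real.pi * x))

lemma sinf_cont (n : ℕ) : Continuous (sinf n) := by unfold sinf; fun_prop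

lemma sinf_bound (n : ℕ) (x : ℝ) : |sinf n x| ≤ √2 := by
  rw [sinf, abs_mul, abs_of_nonneg (Real.sqrt_nonneg _)]
  exact mul_le_of_le_one_right (Real.sqrt_nonneg _) (Real.abs_sin_le_one _)

lemma memLp_of_bdd {f : ℝ → ℝ} (hf : Continuous f) (C : ℝ) (h : ∀ x ∈ Ioo (0:ℝ) 1, |f x| ≤ C) : MemLp f 2 μ01 := by
  refine MemLp.of_bound hf.aestronglyMeasurable C ?_
  unfold μ01
  filter_upwards [ae_restrict_mem measurableSet_Ioo] with x hx using h x hx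

lemma memLp_of_cont {f : ℝ → ℝ} (hf : Continuous f) : MemLp f 2 μ01 := by
  obtain ⟨C, hC⟩ := (isCompact_Icc (a := (0:ℝ)) (b := 1)).exists_bound_of_continuousOn hf.continuousOn
  exact memLp_of_bdd hf C (fun x hx => hC x (Ioo_subset_Icc_self hx))

def sinLp (n : ℕ) : Hsp := (memLp_of_cont (sinf_cont n)).toLp

lemma inner_toLp {f : ℝ → ℝ} (hf : MemLp f 2 μ01) (g : Hsp) :
    inner ℝ (hf.toLp) g = ∫ x, f x * g x ∂μ01 := by
  rw [L2.inner_def]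
  apply integral_congr_ae
  filter_upwards [hf.coeFn_toLp] with x hx
  rw [hx]; simp [mul_comm]

lemma inner_sinLp (n : ℕ) (g : Hsp) : inner ℝ (sinLp n) g = ∫ x, sinf n x * g x ∂μ01 := inner_toLp _ g

lemma int_cos (k : ℤ) (hk : k ≠ 0) : ∫ x in (0:ℝ)..1, Real.cos (k * (Real.pi * x)) = 0 := by
  have hne : (k:ℝ) * Real.pi ≠ 0 := mul_ne_zero (by exact_mod_cast hk) Real.pi_ne_zero
  simp_rw [← mul_assoc]
  rw [intervalIntegral.integral_comp_mul_left (fun y => Real.cos y) hne]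
  simp

lemma int01 (f : ℝ → ℝ) : ∫ x, f x ∂μ01 = ∫ x in (0:ℝ)..1, f x := by
  rw [intervalIntegral.integral_of_le zero_le_one, integral_Ioc_eq_integral_Ioo, μ01]

lemma sin_orthonormal : Orthonormal ℝ sinLp := by
  rw [orthonormal_iff_ite]
  intro i j
  rw [inner_sinLp]
  have : ∫ x, sinf i x * sinLp j x ∂μ01 = ∫ x, sinf i x * sinf j x ∂μ01 := by
    apply integral_congr_ae
    filter_upwards [(memLp_of_cont (sinf_cont j)).coeFn_toLp] with x hx
    rw [sinLp, hx]
  rw [this, int01]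
  have e : ∀ x, sinf i x * sinf j x = Real.cos (((i:ℤ) - j : ℤ) * (Real.pi * x))
      - Real.cos (((i:ℤ)+j+2:ℤ) * (Real.pi * x)) := by
    intro x
    have h2 : √2 * √2 = 2 := Real.mul_self_sqrt (by norm_num)
    have a1 : (((i:ℤ) - j : ℤ):ℝ) * (Real.pi * x) = (i+1:ℕ) * (Real.pi * x) - (j+1:ℕ) * (Real.pi * x) := by push_cast; ring
    have a2 : (((i:ℤ)+j+2:ℤ):ℝ) * (Real.pi * x) = (i+1:ℕ) * (Real.pi * x) + (j+1:ℕ) * (Real.pi * x) := by push_cast; ring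
    rw [a1, a2, Real.cos_sub, Real.cos_add, sinf, sinf]
    linear_combination Real.sin ((i+1:ℕ) * (Real.pi * x)) * Real.sin ((j+1:ℕ) * (Real.pi * x)) * h2
  simp_rw [e]
  rw [intervalIntegral.integral_sub (Continuous.intervalIntegrable (by fun_prop) _ _)
    (Continuous.intervalIntegrable (by fun_prop) _ _), int_cos ((i:ℤ)+j+2) (by omega)]
  split_ifs with h
  · subst h; simp
  · rw [int_cos _ (by omega)]; simp

lemma sin_complete (f : Hsp) (h : ∀ n, inner ℝ (sinLp n) f = 0) : f = 0 := by
  set φ : ℝ → ℝ := (Ioo (0:ℝ) 1).indicator f with hφ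
  have hfm : MemLp f 2 (volume.restrict (Ioo (0:ℝ) 1)) := Lp.memLp f
  have hφm : MemLp φ 2 volume := by rw [hφ, memLp_indicator_iff_restrict measurableSet_Ioo]; exact hfm
  have hφn : MemLp (fun x => φ (-x)) 2 volume :=
    hφm.comp_measurePreserving (Measure.measurePreserving_neg volume)
  have hF : MemLp (fun x => ((φ x - φ (-x) : ℝ) : ℂ)) 2 volume := (hφm.sub hφn).ofReal
  have hab : (-1:ℝ) < 1 := by norm_num
  have hsub : Ioo (0:ℝ) 1 ⊆ Ioc (-1:ℝ) 1 := fun x hx => ⟨by linarith [hx.1], hx.2.le⟩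
  have hsq := hasSum_sq_fourierCoeffOn hab (hF.restrict (Ioc (-1) 1))
  have hφi : IntervalIntegrable (fun x => (φ x : ℂ)) volume (-1) 1 := by
    rw [intervalIntegrable_iff_integrableOn_Ioc_of_le hab.le]
    exact ((hφm.restrict (Ioc (-1) 1)).ofReal (K := ℂ)).integrable (by norm_num)
  have hφni : IntervalIntegrable (fun x => (φ (-x) : ℂ)) volume (-1) 1 := by
    rw [intervalIntegrable_iff_integrableOn_Ioc_of_le hab.le]
    exact ((hφn.restrict (Ioc (-1) 1)).ofReal (K := ℂ)).integrable (by norm_num)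
  have hsin : ∀ n : ℤ, ∫ x in (-1:ℝ)..1, Real.sin (n * (Real.pi * x)) * φ x = 0 := by
    have hnat : ∀ n : ℕ, ∫ x in (-1:ℝ)..1, Real.sin (n * (Real.pi * x)) * φ x = 0 := by
      intro n
      rcases n with _ | n
      · simp
      · have h1 := h n
        rw [inner_sinLp] at h1
        simp only [sinf, mul_assoc] at h1
        rw [integral_const_mul] at h1
        have h2 : ∫ x, Real.sin ((n+1:ℕ) * (Real.pi * x)) * f x ∂μ01 = 0 := by
          rcases mul_eq_zero.1 h1 with h | h
          · norm_num at h
          · exact h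
        rw [intervalIntegral.integral_of_le hab.le]
        have : ∀ x, Real.sin ((n+1:ℕ) * (Real.pi * x)) * φ x = (Ioo (0:ℝ) 1).indicator
            (fun x => Real.sin ((n+1:ℕ) * (Real.pi * x)) * f x) x := by
          intro x; simp only [φ, indicator]; split_ifs <;> simp
        simp_rw [this]
        rw [setIntegral_indicator measurableSet_Ioo, inter_eq_right.2 hsub]
        exact h2
    intro n
    obtain ⟨m, rfl | rfl⟩ := n.eq_nat_or_neg
    · exact_mod_cast hnat m
    · have := hnat m
      simp only [Int.cast_neg, Int.cast_natCast, neg_mul, Real.sin_neg, intervalIntegral.integral_neg, this, neg_zero]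
  have hz : ∀ n : ℤ, fourierCoeffOn hab (fun x => ((φ x - φ (-x) : ℝ) : ℂ)) n = 0 := by
    intro n
    rw [fourierCoeffOn_eq_integral]
    have hc : Continuous (fun x : ℝ => (fourier (-n) (x : AddCircle ((1:ℝ) - -1)) : ℂ)) :=
      (map_continuous (fourier (-n))).comp (AddCircle.continuous_mk' _)
    have e1 : ∫ x in (-1:ℝ)..1, fourier (-n) (x : AddCircle ((1:ℝ) - -1)) • ((φ x - φ (-x) : ℝ) : ℂ)
       = (∫ x in (-1:ℝ)..1, fourier (-n) (x : AddCircle ((1:ℝ) - -1)) * (φ x : ℂ))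
        - ∫ x in (-1:ℝ)..1, fourier (-n) (x : AddCircle ((1:ℝ) - -1)) * (φ (-x) : ℂ) := by
      rw [← intervalIntegral.integral_sub (hφi.continuousOn_mul hc.continuousOn)
        (hφni.continuousOn_mul hc.continuousOn)]
      congr 1; ext x; push_cast; rw [smul_eq_mul]; ring
    have e2 : ∫ x in (-1:ℝ)..1, fourier (-n) (x : AddCircle ((1:ℝ) - -1)) * (φ (-x) : ℂ)
       = ∫ x in (-1:ℝ)..1, fourier (-n) ((-x : ℝ) : AddCircle ((1:ℝ) - -1)) * (φ x : ℂ) := by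
      have := intervalIntegral.integral_comp_neg (a := -1) (b := 1) (fun x : ℝ => fourier (-n) ((-x : ℝ) : AddCircle ((1:ℝ) - -1)) * (φ x : ℂ))
      simp only [neg_neg] at this
      exact this
    have hc2 : Continuous (fun x : ℝ => (fourier (-n) ((-x : ℝ) : AddCircle ((1:ℝ) - -1)) : ℂ)) :=
      hc.comp continuous_neg
    rw [e1, e2, ← intervalIntegral.integral_sub (hφi.continuousOn_mul hc.continuousOn)
        (hφi.continuousOn_mul hc2.continuousOn)]
    have e3 : ∀ x : ℝ, fourier (-n) (x : AddCircle ((1:ℝ) - -1)) * (φ x : ℂ) -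
        fourier (-n) ((-x : ℝ) : AddCircle ((1:ℝ) - -1)) * (φ x : ℂ) =
        (-2 * Complex.I) * ((Real.sin (n * (Real.pi * x)) * φ x : ℝ) : ℂ) := by
      intro x
      rw [fourier_coe_apply, fourier_coe_apply]
      have a1 : 2 * (Real.pi:ℂ) * Complex.I * ((-n : ℤ):ℂ) * x / ((1 - -1 : ℝ):ℂ) = -((n * (Real.pi * x) : ℝ) : ℂ) * Complex.I := by
        push_cast; ring
      have a2 : 2 * (Real.pi:ℂ) * Complex.I * ((-n : ℤ):ℂ) * ((-x:ℝ):ℂ) / ((1 - -1 : ℝ):ℂ) = ((n * (Real.pi * x) : ℝ) : ℂ) * Complex.I := by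
        push_cast; ring
      rw [a1, a2, Complex.exp_mul_I, Complex.exp_mul_I, Complex.cos_neg, Complex.sin_neg,
        Complex.ofReal_mul (Real.sin _), Complex.ofReal_sin]
      ring
    simp_rw [e3]
    rw [intervalIntegral.integral_const_mul, intervalIntegral.integral_ofReal, hsin]
    simp
  simp only [hz] at hsq
  have h0 : ∫ x in (-1:ℝ)..1, ‖((φ x - φ (-x) : ℝ) : ℂ)‖^2 = 0 := by
    have := hsq.unique (a₂ := 0) (by simp)
    simpa using this
  rw [intervalIntegral.integral_of_le hab.le, setIntegral_eq_zero_iff_of_nonneg_ae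
    (Eventually.of_forall fun x => by positivity)] at h0
  · rw [Lp.ext_iff]
    have h1 : ∀ᵐ x ∂(volume.restrict (Ioo (0:ℝ) 1)), ‖((φ x - φ (-x) : ℝ) : ℂ)‖^2 = 0 :=
      ae_restrict_of_ae_restrict_of_subset hsub h0
    have h2 : ∀ᵐ x ∂(volume.restrict (Ioo (0:ℝ) 1)), x ∈ Ioo (0:ℝ) 1 := ae_restrict_mem measurableSet_Ioo
    have h3 := Lp.coeFn_zero ℝ 2 μ01
    change ∀ᵐ x ∂(volume.restrict (Ioo (0:ℝ) 1)), f x = (0 : Hsp) x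
    filter_upwards [h1, h2, h3] with x a b c
    rw [c]
    have b' : -x ∉ Ioo (0:ℝ) 1 := fun h => by linarith [h.1, b.1]
    simpa [φ, indicator_of_mem b, indicator_of_notMem b'] using a
  · exact (((memLp_two_iff_integrable_sq_norm hF.1).1 hF).integrableOn)

def sinBasis : HilbertBasis ℕ ℝ Hsp :=
  HilbertBasis.mkOfOrthogonalEqBot sin_orthonormal (by
    rw [Submodule.eq_bot_iff]
    intro f hf
    apply sin_complete
    intro n
    exact (Submodule.mem_orthogonal _ _).1 hf _ (Submodule.subset_span ⟨n, rfl⟩))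

lemma sinBasis_apply (n : ℕ) : sinBasis n = sinLp n := by
  simp [sinBasis]

def lamb (n : ℕ) : ℝ := ((n+1:ℕ) * Real.pi)^2

lemma int_of_L2 (g : Hsp) : Integrable g μ01 := (Lp.memLp g).integrable (by norm_num)

lemma int_sinf_mul (n : ℕ) (g : Hsp) : Integrable (fun x => sinf n x * g x) μ01 := by
  refine (int_of_L2 g).bdd_mul (c := √2) (sinf_cont n).aestronglyMeasurable ?_
  exact Eventually.of_forall fun x => sinf_bound n x

lemma series_inner {a : ℕ → ℝ} (ha : Summable fun n => |a n|) (φ : Hsp) :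
    HasSum (fun n => a n * inner ℝ (sinLp n) φ) (∫ x, (∑' n, a n * sinf n x) * φ x ∂μ01) := by
  have h := hasSum_integral_of_summable_integral_norm (μ := μ01) (F := fun n x => a n * (sinf n x * φ x))
    (fun n => (int_sinf_mul n φ).const_mul _) (by
      refine Summable.of_nonneg_of_le (fun n => integral_nonneg fun x => norm_nonneg _) (fun n => ?_)
        (ha.mul_right (√2 * ∫ x, |φ x| ∂μ01))
      simp only [norm_mul, Real.norm_eq_abs]
      rw [integral_const_mul]
      gcongr
      rw [← integral_const_mul]
      refine integral_mono ?_ ((int_of_L2 φ).abs.const_mul _) fun x => ?_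
      · simpa [abs_mul] using (int_sinf_mul n φ).abs
      · exact mul_le_mul_of_nonneg_right (sinf_bound n x) (abs_nonneg _))
  refine hasSum_congr2 h (fun n => ?_) ?_
  · rw [inner_sinLp, integral_const_mul]
  · congr 1; ext x; rw [← tsum_mul_right]; congr 1; ext n; ring

lemma series_cont {a : ℕ → ℝ} (ha : Summable fun n => |a n|) : Continuous (fun x => ∑' n, a n * sinf n x) := by
  refine continuous_tsum (fun n => continuous_const.mul (sinf_cont n)) (ha.mul_right (√2)) fun n x => ?_
  rw [norm_mul, Real.norm_eq_abs, Real.norm_eq_abs]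
  exact mul_le_mul_of_nonneg_left (sinf_bound n x) (abs_nonneg _)

lemma series_coeff {a : ℕ → ℝ} (ha : Summable fun n => |a n|) (m : ℕ) :
    inner ℝ (sinLp m) (memLp_of_cont (series_cont ha)).toLp = a m := by
  rw [real_inner_comm, inner_toLp, ← (series_inner ha (sinLp m)).tsum_eq, tsum_eq_single m]
  · rw [orthonormal_iff_ite.1 sin_orthonormal]; simp
  · intro n hn; rw [orthonormal_iff_ite.1 sin_orthonormal]; simp [hn]

lemma series_repr (f : Hsp) (ha : Summable fun n => |inner ℝ (sinLp n) f|) :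
    ∀ᵐ x ∂μ01, (∑' n, inner ℝ (sinLp n) f * sinf n x) = f x := by
  have : f - (memLp_of_cont (series_cont ha)).toLp = 0 := by
    apply sin_complete
    intro n
    rw [inner_sub_right, series_coeff ha, sub_self]
  rw [sub_eq_zero] at this
  have h := (memLp_of_cont (series_cont ha)).coeFn_toLp
  rw [← this] at h
  filter_upwards [h] with x hx using hx.symm

lemma abs_coeff_le (n : ℕ) (f : Hsp) : |inner ℝ (sinLp n) f| ≤ ‖f‖ := by
  have := abs_real_inner_le_norm (sinLp n) f
  rwa [sin_orthonormal.1 n, one_mul] at this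

lemma exp_lamb (n : ℕ) (τ : ℝ) : Real.exp (-(lamb n * τ)) = Real.exp (-(Real.pi^2*τ)) ^ ((n+1)^2) := by
  rw [← Real.exp_nat_mul]; congr 1; unfold lamb; push_cast; ring

lemma exp_q {τ : ℝ} (hτ : 0 < τ) : Real.exp (-(Real.pi^2*τ)) < 1 := by
  rw [Real.exp_lt_one_iff]; have := Real.pi_pos; rw [neg_lt_zero]; positivity

lemma summable_q (k : ℕ) {q : ℝ} (hq : 0 < q) (hq1 : q < 1) :
    Summable fun n : ℕ => ((n+1:ℕ):ℝ)^k * q^((n+1)^2) := by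
  have h := summable_pow_mul_geometric_of_norm_lt_one k (r := q) (by rwa [Real.norm_eq_abs, abs_of_pos hq])
  have h2 := (summable_nat_add_iff 1).2 h
  refine Summable.of_nonneg_of_le (fun n => by positivity) (fun n => ?_) h2
  gcongr ?_ * ?_
  exact pow_le_pow_of_le_one hq.le hq1.le (Nat.le_self_pow two_ne_zero _)

lemma summable_exp_lamb {τ : ℝ} (hτ : 0 < τ) : Summable fun n => Real.exp (-(lamb n * τ)) := by
  simp_rw [exp_lamb]
  simpa using summable_q 0 (Real.exp_pos _) (exp_q hτ)

lemma heat_exists {τ : ℝ} (hτ : 0 < τ) (φ : Hsp) (hφ : ∀ᵐ x ∂μ01, 0 ≤ φ x) :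
    ∃ g : Hsp, (∀ n, inner ℝ (sinLp n) g = Real.exp (-(lamb n * τ)) * inner ℝ (sinLp n) φ) ∧
      (∀ᵐ x ∂μ01, 0 ≤ g x) ∧ (φ ≠ 0 → ∀ᵐ x ∂μ01, 0 < g x) := by
  set a : ℕ → ℝ := fun n => Real.exp (-(lamb n * τ)) * inner ℝ (sinLp n) φ
  have ha : Summable fun n => |a n| := by
    refine Summable.of_nonneg_of_le (fun n => abs_nonneg _) (fun n => ?_) ((summable_exp_lamb hτ).mul_right ‖φ‖)
    simp only [a]
    rw [abs_mul, abs_of_pos (Real.exp_pos _)]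
    gcongr; exact abs_coeff_le n φ
  have hK : ∀ x, Summable fun n => |Real.exp (-(lamb n * τ)) * sinf n x| := by
    intro x
    refine Summable.of_nonneg_of_le (fun n => abs_nonneg _) (fun n => ?_) ((summable_exp_lamb hτ).mul_right (√2))
    rw [abs_mul, abs_of_pos (Real.exp_pos _)]
    gcongr; exact sinf_bound n x
  have hrep : ∀ x, (∑' n, a n * sinf n x) = ∫ y, (∑' n, (Real.exp (-(lamb n * τ)) * sinf n x) * sinf n y) * φ y ∂μ01 := by
    intro x
    rw [← (series_inner (hK x) φ).tsum_eq]
    congr 1; ext n; simp only [a]; ring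
  have hpos : ∀ x ∈ Ioo (0:ℝ) 1, ∀ y ∈ Ioo (0:ℝ) 1, 0 < (∑' n, (Real.exp (-(lamb n * τ)) * sinf n x) * sinf n y) := by
    intro x hx y hy
    have h := kernel_pos (Real.exp_pos _) (exp_q hτ) hx hy
    have e : (∑' n, (Real.exp (-(lamb n * τ)) * sinf n x) * sinf n y) =
      2 * ∑' n : ℕ, Real.exp (-(Real.pi^2*τ))^((n+1)^2) * (Real.sin ((n+1:ℕ) * (Real.pi * x)) * Real.sin ((n+1:ℕ) * (Real.pi * y))) := by
      rw [← tsum_mul_left]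
      congr 1; ext n
      rw [exp_lamb, sinf, sinf]
      have h2 : √2 * √2 = 2 := Real.mul_self_sqrt (by norm_num)
      generalize √2 = r at *
      rw [← h2]; ring
    rw [e]; linarith
  have hmem : ∀ᵐ x ∂μ01, x ∈ Ioo (0:ℝ) 1 := ae_restrict_mem measurableSet_Ioo
  have hg := (memLp_of_cont (series_cont ha)).coeFn_toLp
  refine ⟨(memLp_of_cont (series_cont ha)).toLp, series_coeff ha, ?_, ?_⟩
  · filter_upwards [hg, hmem] with x hx hx01
    rw [hx, hrep x]
    apply integral_nonneg_of_ae
    filter_upwards [hmem, hφ] with y hy hy2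
    exact mul_nonneg (hpos x hx01 y hy).le hy2
  · intro hne
    filter_upwards [hg, hmem] with x hx hx01
    rw [hx, hrep x]
    have hnn : 0 ≤ᵐ[μ01] fun y => (∑' n, (Real.exp (-(lamb n * τ)) * sinf n x) * sinf n y) * φ y := by
      filter_upwards [hmem, hφ] with y hy hy2
      exact mul_nonneg (hpos x hx01 y hy).le hy2
    refine lt_of_le_of_ne (integral_nonneg_of_ae hnn) (fun h0 => hne ?_)
    have hint : Integrable (fun y => (∑' n, (Real.exp (-(lamb n * τ)) * sinf n x) * sinf n y) * φ y) μ01 := by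
      obtain ⟨C, hC⟩ := (isCompact_Icc (a := (0:ℝ)) (b := 1)).exists_bound_of_continuousOn (series_cont (hK x)).continuousOn
      refine (int_of_L2 φ).bdd_mul (c := C) (series_cont (hK x)).aestronglyMeasurable ?_
      filter_upwards [hmem] with y hy using hC y (Ioo_subset_Icc_self hy)
    have hz := (integral_eq_zero_iff_of_nonneg_ae hnn hint).1 h0.symm
    rw [Lp.ext_iff]
    filter_upwards [hz, hmem, Lp.coeFn_zero ℝ 2 μ01] with y h1 h2 h3
    rw [h3]
    simp only [Pi.zero_apply] at h1 ⊢
    exact (mul_eq_zero.1 h1).resolve_left (hpos x hx01 y h2).ne'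

lemma series_smooth {a : ℕ → ℝ} {q C : ℝ} (hq : 0 < q) (hq1 : q < 1) (ha : ∀ n, |a n| ≤ C * q^((n+1)^2)) :
    ContDiff ℝ (⊤ : ℕ∞) (fun x => ∑' n, a n * sinf n x) := by
  refine contDiff_tsum (v := fun k n => (C * √2 * Real.pi^k) * (((n+1:ℕ):ℝ)^k * q^((n+1)^2))) ?_ ?_ ?_
  · intro n; unfold sinf; fun_prop
  · intro k _; exact (summable_q k hq hq1).mul_left _
  · intro k n x _
    rw [norm_iteratedFDeriv_eq_norm_iteratedDeriv]
    have e : (fun x => a n * sinf n x) = fun x => (a n * √2) * (fun x => Real.sin (((n+1:ℕ) * Real.pi) * x)) x := by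
      ext x; simp only [sinf]; ring_nf
    rw [e, iteratedDeriv_const_mul_field, iteratedDeriv_comp_const_mul Real.contDiff_sin]
    rw [norm_mul, norm_mul, norm_mul, Real.norm_eq_abs, Real.norm_eq_abs, Real.norm_eq_abs, Real.norm_eq_abs,
      abs_of_nonneg (Real.sqrt_nonneg _), abs_of_nonneg (show (0:ℝ) ≤ (((n+1:ℕ):ℝ) * Real.pi)^k by have := Real.pi_pos; positivity)]
    have h1 := Real.abs_iteratedDeriv_sin_le_one k (((n+1:ℕ) * Real.pi) * x)
    have h2 := ha n
    have h3 : 0 ≤ C * q^((n+1)^2) := (abs_nonneg _).trans h2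
    have hpi := Real.pi_pos
    calc _ ≤ (C * q^((n+1)^2)) * √2 * ((((n+1:ℕ):ℝ) * Real.pi)^k * 1) := by gcongr
      _ = _ := by rw [mul_pow]; ring

lemma ac_ibp {f d : ℝ → ℝ} {a b : ℝ} (hab : a ≤ b) (hd : IntervalIntegrable d volume a b)
    (hf : ∀ t ∈ Icc a b, f t = f a + ∫ s in a..t, d s) {k k' : ℝ → ℝ}
    (hk : ∀ x, HasDerivAt k (k' x) x) (hk' : Continuous k') :
    ∫ s in a..b, (d s * k s + f s * k' s) = f b * k b - f a * k a := by
  have hF : AbsolutelyContinuousOnInterval (fun t => f a + ∫ s in a..t, d s) a b := by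
    have h1 := hd.absolutelyContinuousOnInterval_intervalIntegral (c := a) left_mem_uIcc
    have h2 : AbsolutelyContinuousOnInterval (fun _ : ℝ => f a) a b :=
      ContDiffOn.absolutelyContinuousOnInterval contDiffOn_const
    exact h2.add h1
  have hderiv : deriv k = k' := funext fun x => (hk x).deriv
  have hkc : ContDiff ℝ 1 k := by
    rw [contDiff_one_iff_deriv]
    exact ⟨fun x => (hk x).differentiableAt, hderiv ▸ hk'⟩
  have hK : AbsolutelyContinuousOnInterval k a b := hkc.contDiffOn.absolutelyContinuousOnInterval
  have h := hF.integral_deriv_mul_eq_sub hK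
  rw [hf b (right_mem_Icc.2 hab)]
  simp only [intervalIntegral.integral_same, add_zero] at h
  rw [← h]
  apply intervalIntegral.integral_congr_ae
  filter_upwards [hd.ae_hasDerivAt_integral] with x hx hx'
  have hx2 : x ∈ uIcc a b := uIoc_subset_uIcc hx'
  have h3 := (hx hx2 a left_mem_uIcc).const_add (f a)
  rw [h3.deriv, hderiv, hf x (by rwa [uIcc_of_le hab] at hx2)]

lemma ii_w (w : Hsp) : IntervalIntegrable w volume 0 1 := by
  rw [intervalIntegrable_iff_integrableOn_Ioo_of_le zero_le_one]
  exact int_of_L2 w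

lemma G_rep {g : ℝ → ℝ} {w : Hsp}
    (hg : ∀ x ∈ Ioo (0:ℝ) 1, ∀ y ∈ Ioo (0:ℝ) 1, g x - g y = ∫ z in y..x, w z) :
    ∃ c : ℝ, ∀ x ∈ Ioo (0:ℝ) 1, g x = c + ∫ z in (0:ℝ)..x, w z := by
  refine ⟨g (1/2) - ∫ z in (0:ℝ)..(1/2), w z, fun x hx => ?_⟩
  have h := hg x hx (1/2) (by constructor <;> norm_num)
  have hI : ∀ y ∈ Ioo (0:ℝ) 1, IntervalIntegrable w volume 0 y := fun y hy =>
    (ii_w w).mono_set (by rw [uIcc_of_le hy.1.le, uIcc_of_le zero_le_one]; exact Icc_subset_Icc_right hy.2.le)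
  have h2 := intervalIntegral.integral_interval_sub_left (hI x hx) (hI (1/2) (by constructor <;> norm_num))
  linarith

lemma domA_coeff {v w : Hsp} (h : InDomainA v w) (n : ℕ) :
    inner ℝ (sinLp n) w = -(lamb n * inner ℝ (sinLp n) v) := by
  obtain ⟨vt, hc, h0, h1, hv, g, hg, hgw⟩ := h
  obtain ⟨c, hcg⟩ := G_rep hgw
  set m : ℝ := ((n+1:ℕ):ℝ) with hm
  set G : ℝ → ℝ := fun x => c + ∫ z in (0:ℝ)..x, w z with hG
  have hs : ∀ x, HasDerivAt (sinf n) (√2 * (m * Real.pi) * Real.cos (m * (Real.pi * x))) x := by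
    intro x
    have := ((((hasDerivAt_id x).const_mul Real.pi).const_mul m).sin).const_mul √2
    refine this.congr_deriv ?_; simp only [id]; ring
  have hcs : ∀ x, HasDerivAt (fun x => √2 * (m * Real.pi) * Real.cos (m * (Real.pi * x))) (-(lamb n) * sinf n x) x := by
    intro x
    have := ((((hasDerivAt_id x).const_mul Real.pi).const_mul m).cos).const_mul (√2 * (m * Real.pi))
    refine this.congr_deriv ?_; simp only [id, lamb, sinf]; ring
  have s0 : sinf n 0 = 0 := by simp [sinf]
  have s1 : sinf n 1 = 0 := by
    simp only [sinf, mul_one]; rw [Real.sin_nat_mul_pi, mul_zero]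
  have e1 := ac_ibp (f := G) (d := w) zero_le_one (ii_w w) (fun t _ => by simp [hG]) hs (by fun_prop)
  rw [s0, s1] at e1
  have hGc : ContinuousOn G (uIcc 0 1) := by
    have := intervalIntegral.continuousOn_primitive_interval (f := w) (μ := volume) (a := 0) (b := 1) (by
      have := ii_w w
      rw [intervalIntegrable_iff_integrableOn_Icc_of_le zero_le_one] at this
      rwa [uIcc_of_le zero_le_one])
    exact continuousOn_const.add this
  have hGi : IntervalIntegrable G volume 0 1 := hGc.intervalIntegrable
  have e2 := intervalIntegral.integral_deriv_mul_eq_sub_of_hasDerivAt (a := 0) (b := 1) (u := vt) (u' := G)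
    (v := fun x => √2 * (m * Real.pi) * Real.cos (m * (Real.pi * x))) (v' := fun x => -(lamb n) * sinf n x)
    (by rwa [uIcc_of_le zero_le_one]) (by fun_prop)
    (fun x hx => by
      rw [min_eq_left zero_le_one, max_eq_right zero_le_one] at hx
      rw [hG]; simp only; rw [← hcg x hx]; exact hg x hx)
    (fun x _ => hcs x) hGi (by
      apply Continuous.intervalIntegrable
      exact continuous_const.mul (sinf_cont n))
  rw [h0, h1] at e2
  have hvt : ContinuousOn vt (uIcc 0 1) := by rwa [uIcc_of_le zero_le_one]
  rw [intervalIntegral.integral_add] at e1 e2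
  · rw [inner_sinLp, inner_sinLp, int01, ← integral_const_mul]
    have e3 : ∫ x, lamb n * (sinf n x * v x) ∂μ01 = ∫ x in (0:ℝ)..1, -(vt x * (-(lamb n) * sinf n x)) := by
      rw [← int01]
      apply integral_congr_ae
      filter_upwards [hv] with x hx
      rw [hx]; ring
    rw [e3, intervalIntegral.integral_neg]
    have e4 : ∫ x in (0:ℝ)..1, sinf n x * w x = ∫ x in (0:ℝ)..1, w x * sinf n x := by
      congr 1; ext x; ring
    rw [e4]; linarith
  · exact hGi.mul_continuousOn (by fun_prop)
  · apply ContinuousOn.intervalIntegrable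
    exact hvt.mul (continuous_const.mul (sinf_cont n)).continuousOn
  · exact (ii_w w).mul_continuousOn (sinf_cont n).continuousOn
  · exact ContinuousOn.intervalIntegrable (hGc.mul (by fun_prop))

lemma domA_zero {v w : Hsp} (h : InDomainA v w) (hv0 : ∀ᵐ x ∂μ01, 0 ≤ v x) :
    ∀ᵐ x ∂μ01, v x = 0 → w x = 0 := by
  obtain ⟨vt, hc, h0, h1, hv, g, hg, hgw⟩ := h
  obtain ⟨c, hcg⟩ := G_rep hgw
  have hnn : ∀ x ∈ Ioo (0:ℝ) 1, 0 ≤ vt x := by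
    have hcI : ContinuousOn vt (Ioo 0 1) := hc.mono Ioo_subset_Icc_self
    have he : (fun x => max (vt x) 0) =ᵐ[volume.restrict (Ioo (0:ℝ) 1)] vt := by
      change ∀ᵐ x ∂μ01, _
      filter_upwards [hv, hv0] with x h1 h2
      rw [max_eq_left]; rw [h1]; exact h2
    have := Measure.eqOn_open_of_ae_eq he isOpen_Ioo (hcI.sup continuousOn_const) hcI
    intro x hx
    rw [← this hx]; exact le_max_right _ _
  set S : Set ℝ := {x ∈ Ioo (0:ℝ) 1 | vt x = 0} with hS
  have hg0 : ∀ x ∈ S, c + ∫ z in (0:ℝ)..x, w z = 0 := by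
    intro x hx
    rw [← hcg x hx.1]
    have : IsLocalMin vt x := by
      filter_upwards [isOpen_Ioo.mem_nhds hx.1] with y hy
      rw [hx.2]; exact hnn y hy
    exact this.hasDerivAt_eq_zero (hg x hx.1)
  have hcount : ∀ᵐ x : ℝ, x ∉ { x ∈ S | 𝓝[S ∩ Ioi x] x = ⊥ } :=
    (countable_setOfPred_isolated_right_within (s := S)).ae_notMem volume
  have hd := (ii_w w).ae_hasDerivAt_integral
  have hmem : ∀ᵐ x ∂μ01, x ∈ Ioo (0:ℝ) 1 := ae_restrict_mem measurableSet_Ioo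
  filter_upwards [hmem, hv, ae_restrict_of_ae hcount, ae_restrict_of_ae hd] with x hx hvx hcx hdx hvx0
  have hxS : x ∈ S := ⟨hx, by rw [hvx, hvx0]⟩
  have hne : (𝓝[S ∩ Ioi x] x).NeBot := ⟨fun hb => hcx ⟨hxS, hb⟩⟩
  have hd := (hdx (by rw [uIcc_of_le zero_le_one]; exact Ioo_subset_Icc_self hx) 0 left_mem_uIcc).const_add c
  rw [hasDerivAt_iff_tendsto_slope] at hd
  have hd2 := hd.mono_left (nhdsWithin_mono x (show S ∩ Ioi x ⊆ {x}ᶜ from fun y hy => ne_of_gt hy.2))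
  refine tendsto_nhds_unique hd2 (tendsto_const_nhds.congr' ?_)
  filter_upwards [self_mem_nhdsWithin] with y hy
  rw [slope_def_field, hg0 y hy.1, hg0 x hxS]; simp

lemma sol_deriv {b ω : ℝ → ℝ} {u r u' uxx : ℝ → Hsp} (h : IsStrongSolutionWith b ω 0 u r u' uxx) :
    ∀ᵐ t ∂(volume.restrict (Ioi (0:ℝ))), HasDerivAt u (u' t) t := by
  have key : ∀ k : ℕ, ∀ᵐ t : ℝ, t ∈ Ioo (1/((k:ℝ)+1)) ((k:ℝ)+2) → HasDerivAt u (u' t) t := by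
    intro k
    have hk : (0:ℝ) < 1/((k:ℝ)+1) := by positivity
    have hk2 : 1/((k:ℝ)+1) < (k:ℝ)+2 := by
      rw [div_lt_iff₀ (by positivity)]
      have : (0:ℝ) ≤ k := Nat.cast_nonneg k
      nlinarith
    obtain ⟨hi, hu⟩ := h.fund _ _ hk hk2
    filter_upwards [hi.ae_hasDerivAt_integral] with t ht htI
    have h1 := (ht (by rw [uIcc_of_le hk2.le]; exact Ioo_subset_Icc_self htI) _ left_mem_uIcc).const_add (u (1/((k:ℝ)+1)))
    refine h1.congr_of_eventuallyEq ?_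
    filter_upwards [isOpen_Ioo.mem_nhds htI] with y hy
    exact hu y (Ioo_subset_Icc_self hy)
  rw [ae_restrict_iff' measurableSet_Ioi]
  filter_upwards [ae_all_iff.2 key] with t ht ht0
  obtain ⟨k1, hk1⟩ := exists_nat_one_div_lt (mem_Ioi.1 ht0)
  obtain ⟨k2, hk2⟩ := exists_nat_gt t
  refine ht (max k1 k2) ⟨lt_of_le_of_lt ?_ hk1, ?_⟩
  · apply one_div_le_one_div_of_le (by positivity)
    gcongr; exact le_max_left _ _
  · have : (k2:ℝ) ≤ ((max k1 k2 : ℕ):ℝ) := by exact_mod_cast le_max_right _ _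
    linarith

lemma deriv_nonneg_on_zero {u : ℝ → Hsp} {d : Hsp} {t : ℝ} (hd : HasDerivAt u d t)
    (hnn : ∀ s, t ≤ s → ∀ᵐ x ∂μ01, 0 ≤ u s x) : ∀ᵐ x ∂μ01, u t x = 0 → 0 ≤ d x := by
  rw [hasDerivAt_iff_tendsto_slope] at hd
  have hseq : Tendsto (fun n : ℕ => t + 1/((n:ℝ)+1)) atTop (𝓝[≠] t) := by
    refine tendsto_nhdsWithin_iff.2 ⟨?_, Eventually.of_forall fun n => ?_⟩
    · simpa using (tendsto_one_div_add_atTop_nhds_zero_nat (𝕜 := ℝ)).const_add t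
    · have : (0:ℝ) < 1/((n:ℝ)+1) := by positivity
      simp only [mem_compl_iff, mem_singleton_iff]; linarith
  have h1 := hd.comp hseq
  have h2 := tendstoInMeasure_of_tendsto_Lp h1
  obtain ⟨ns, -, hns⟩ := h2.exists_seq_tendsto_ae
  have hall : ∀ᵐ x ∂μ01, ∀ n : ℕ, u t x = 0 → 0 ≤ (slope u t (t + 1/((n:ℝ)+1)) : Hsp) x := by
    rw [ae_all_iff]
    intro n
    have hp : (0:ℝ) < 1/((n:ℝ)+1) := by positivity
    have e : slope u t (t + 1/((n:ℝ)+1)) = (1/((n:ℝ)+1))⁻¹ • (u (t + 1/((n:ℝ)+1)) - u t) := by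
      rw [slope]; simp
    rw [e]
    filter_upwards [Lp.coeFn_smul (1/((n:ℝ)+1))⁻¹ (u (t + 1/((n:ℝ)+1)) - u t),
      Lp.coeFn_sub (u (t + 1/((n:ℝ)+1))) (u t), hnn (t + 1/((n:ℝ)+1)) (by linarith)] with x a1 a2 a3 a4
    rw [a1, Pi.smul_apply, a2, Pi.sub_apply, a4, sub_zero, smul_eq_mul]
    positivity
  filter_upwards [hns, hall] with x hx hx2 hx0
  exact ge_of_tendsto' hx fun i => hx2 _ hx0

lemma heaviside_pos {s h : ℝ} (hs : 0 < s) (hh : h ∈ heaviside s) : h = 1 := by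
  simpa [heaviside, hs.le.not_gt, hs.ne'] using hh

lemma r_nonneg {b ω : ℝ} (hb : 0 < b) (hω : 0 ≤ ω) {u r u' uxx : ℝ → Hsp}
    (h : IsStrongSolutionWith (fun _ => b) (fun _ => ω) 0 u r u' uxx) (hnn : NonnegOn u 0) :
    ∀ᵐ t ∂(volume.restrict (Ioi (0:ℝ))), ∀ᵐ x ∂μ01, 0 ≤ r t x := by
  filter_upwards [sol_deriv h, h.sel, h.dom, h.eq, ae_restrict_mem measurableSet_Ioi] with t hd hsel hdom heq ht
  have hge : ∀ s, t ≤ s → ∀ᵐ x ∂μ01, 0 ≤ u s x := fun s hs => hnn s (le_trans (le_of_lt ht) hs)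
  have heq' : r t = u' t - uxx t := by rw [heq]; abel
  filter_upwards [hsel, deriv_nonneg_on_zero hd hge, domA_zero hdom (hge t le_rfl), hge t le_rfl,
    Lp.coeFn_sub (u' t) (uxx t)] with x h1 h2 h3 h4 h5
  rcases h4.eq_or_lt with h0 | h0
  · rw [heq', h5, Pi.sub_apply, h3 h0.symm, sub_zero]; exact h2 h0.symm
  · obtain ⟨k, hk, hk2⟩ := h1
    rw [hk2, heaviside_pos h0 hk]; positivity

lemma r_eq_of_pos {b ω : ℝ} {u r : Hsp} (hsel : ∀ᵐ x ∂μ01, ∃ h ∈ heaviside (u x), r x = b * h + ω * u x)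
    (hpos : ∀ᵐ x ∂μ01, 0 < u x) : ∀ᵐ x ∂μ01, r x = b + ω * u x := by
  filter_upwards [hsel, hpos] with x ⟨k, hk, hk2⟩ h0
  rw [hk2, heaviside_pos h0 hk, mul_one]

lemma coeff_fund {b ω : ℝ → ℝ} {u r u' uxx : ℝ → Hsp} (h : IsStrongSolutionWith b ω 0 u r u' uxx)
    {s t : ℝ} (hs : 0 < s) (hst : s < t) (n : ℕ) (l : ℝ) :
    IntervalIntegrable (fun σ => inner ℝ (sinLp n) (u' σ)) volume s t ∧
    ∀ W : ℝ, ∫ σ in s..t, (inner ℝ (sinLp n) (u' σ) * Real.exp (l * σ) + (inner ℝ (sinLp n) (u σ) - W) * (l * Real.exp (l * σ)))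
      = (inner ℝ (sinLp n) (u t) - W) * Real.exp (l * t) - (inner ℝ (sinLp n) (u s) - W) * Real.exp (l * s) := by
  obtain ⟨hi, hu⟩ := h.fund s t hs hst
  have hI : IntervalIntegrable (fun σ => inner ℝ (sinLp n) (u' σ)) volume s t :=
    ⟨hi.1.const_inner _, hi.2.const_inner _⟩
  refine ⟨hI, fun W => ?_⟩
  refine ac_ibp (f := fun σ => inner ℝ (sinLp n) (u σ) - W) (k := fun σ => Real.exp (l * σ)) hst.le hI ?_ ?_ (by fun_prop)
  · intro x hx
    have hix : IntervalIntegrable u' volume s x := hi.mono_set (by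
      rw [uIcc_of_le hx.1, uIcc_of_le hst.le]; exact Icc_subset_Icc_right hx.2)
    have h3 := (innerSL ℝ (sinLp n)).intervalIntegral_comp_comm hix
    simp only [innerSL_apply_apply] at h3
    rw [h3]
    conv_lhs => rw [hu x hx, inner_add_right]
    ring
  · intro x
    have := ((hasDerivAt_id x).const_mul l).exp
    refine this.congr_deriv ?_
    simp only [id]; ring

lemma inner_L2 (f g : Hsp) : inner ℝ f g = ∫ x, f x * g x ∂μ01 := by
  rw [L2.inner_def]
  congr 1; ext x
  simp only [RCLike.inner_apply, conj_trivial]; ring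

lemma inner_L2_nonneg {f g : Hsp} (hf : ∀ᵐ x ∂μ01, 0 ≤ f x) (hg : ∀ᵐ x ∂μ01, 0 ≤ g x) :
    0 ≤ inner ℝ f g := by
  rw [inner_L2]
  apply integral_nonneg_of_ae
  filter_upwards [hf, hg] with x h1 h2 using mul_nonneg h1 h2

lemma hasSum_basis (f g : Hsp) : HasSum (fun n => inner ℝ (sinLp n) f * inner ℝ (sinLp n) g) (inner ℝ f g) := by
  have := sinBasis.hasSum_inner_mul_inner f g
  refine hasSum_congr2 this (fun n => ?_) rfl
  rw [sinBasis_apply, real_inner_comm f]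

lemma ae_interval {p : ℝ → Prop} (h : ∀ᵐ t ∂(volume.restrict (Ioi (0:ℝ))), p t) {s t : ℝ} (hs : 0 < s) (hst : s < t) :
    ∀ᵐ σ, σ ∈ uIoc s t → p σ := by
  rw [ae_restrict_iff' measurableSet_Ioi] at h
  filter_upwards [h] with σ hσ h2
  rw [uIoc_of_le hst.le] at h2
  exact hσ (hs.trans h2.1)

lemma coeff_duhamel {b ω : ℝ → ℝ} {u r u' uxx : ℝ → Hsp} (h : IsStrongSolutionWith b ω 0 u r u' uxx)
    {s t : ℝ} (hs : 0 < s) (hst : s < t) (n : ℕ) :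
    ∫ σ in s..t, Real.exp (-(lamb n * (t - σ))) * inner ℝ (sinLp n) (r σ) =
      inner ℝ (sinLp n) (u t) - Real.exp (-(lamb n * (t - s))) * inner ℝ (sinLp n) (u s) := by
  have h1 := (coeff_fund h hs hst n (lamb n)).2 0
  have e : ∫ σ in s..t, Real.exp (-(lamb n * (t - σ))) * inner ℝ (sinLp n) (r σ) =
      ∫ σ in s..t, Real.exp (-(lamb n * t)) * (inner ℝ (sinLp n) (u' σ) * Real.exp (lamb n * σ) + (inner ℝ (sinLp n) (u σ) - 0) * (lamb n * Real.exp (lamb n * σ))) := by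
    apply intervalIntegral.integral_congr_ae
    filter_upwards [ae_interval h.eq hs hst, ae_interval h.dom hs hst] with σ h2 h3 hσ
    rw [h2 hσ, inner_add_right, domA_coeff (h3 hσ) n,
      show -(lamb n * (t - σ)) = -(lamb n * t) + lamb n * σ by ring, Real.exp_add]
    ring
  rw [e, intervalIntegral.integral_const_mul, h1,
    show -(lamb n * (t - s)) = -(lamb n * t) + lamb n * s by ring, Real.exp_add]
  have h4 : Real.exp (-(lamb n * t)) * Real.exp (lamb n * t) = 1 := by rw [← Real.exp_add]; simp
  linear_combination (inner ℝ (sinLp n) (u t)) * h4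

lemma r_aesm {b ω : ℝ → ℝ} {u r u' uxx : ℝ → Hsp} (h : IsStrongSolutionWith b ω 0 u r u' uxx)
    {s t : ℝ} (hs : 0 < s) (hst : s < t) : MemLp r 2 (volume.restrict (uIoc s t)) := by
  refine (h.rmem (t+1) (by linarith)).mono_measure ?_
  apply Measure.restrict_mono_set
  rw [uIoc_of_le hst.le]
  intro x hx
  exact ⟨hs.trans hx.1, by linarith [hx.2]⟩

lemma bessel_bound (f g : Hsp) (e : ℕ → ℝ) (he : ∀ n, |e n| ≤ 1) (N : ℕ) :
    |∑ n ∈ Finset.range N, inner ℝ (sinLp n) f * (e n * inner ℝ (sinLp n) g)| ≤ (‖f‖^2 + ‖g‖^2)/2 := by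
  have h1 := sin_orthonormal.sum_inner_products_le (x := f) (s := Finset.range N)
  have h2 := sin_orthonormal.sum_inner_products_le (x := g) (s := Finset.range N)
  refine (Finset.abs_sum_le_sum_abs _ _).trans ?_
  calc _ ≤ ∑ n ∈ Finset.range N, (‖(inner ℝ (sinLp n) f : ℝ)‖^2 + ‖(inner ℝ (sinLp n) g : ℝ)‖^2)/2 := by
        apply Finset.sum_le_sum
        intro n _
        rw [abs_mul, abs_mul, Real.norm_eq_abs, Real.norm_eq_abs]
        have a1 := he n
        have a2 := abs_nonneg (inner ℝ (sinLp n) f : ℝ)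
        have a3 := abs_nonneg (inner ℝ (sinLp n) g : ℝ)
        have a4 := mul_le_mul_of_nonneg_right a1 a3
        have a5 := mul_le_mul_of_nonneg_left a4 a2
        nlinarith [sq_nonneg (|(inner ℝ (sinLp n) f : ℝ)| - |(inner ℝ (sinLp n) g : ℝ)|)]
    _ ≤ _ := by
        rw [← Finset.sum_div, Finset.sum_add_distrib]; linarith

lemma lamb_pos (n : ℕ) : 0 < lamb n := by
  have := Real.pi_pos
  unfold lamb; positivity

lemma duhamel_ge {b ω : ℝ} (hb : 0 < b) (hω : 0 ≤ ω) {u r u' uxx : ℝ → Hsp}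
    (h : IsStrongSolutionWith (fun _ => b) (fun _ => ω) 0 u r u' uxx) (hnn : NonnegOn u 0)
    {s t : ℝ} (hs : 0 < s) (hst : s < t) (φ g : Hsp) (hφ : ∀ᵐ x ∂μ01, 0 ≤ φ x)
    (hg : ∀ n, inner ℝ (sinLp n) g = Real.exp (-(lamb n * (t - s))) * inner ℝ (sinLp n) φ) :
    inner ℝ g (u s) ≤ inner ℝ φ (u t) := by
  set F : ℕ → ℝ → ℝ := fun N σ => ∑ n ∈ Finset.range N, inner ℝ (sinLp n) φ * (Real.exp (-(lamb n * (t - σ))) * inner ℝ (sinLp n) (r σ)) with hF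
  set Fi : ℝ → ℝ := fun σ => ∑' n, inner ℝ (sinLp n) φ * (Real.exp (-(lamb n * (t - σ))) * inner ℝ (sinLp n) (r σ)) with hFi
  have hr := r_aesm h hs hst
  have hfinm : IsFiniteMeasure (volume.restrict (uIoc s t)) := by
    rw [uIoc_of_le hst.le]; infer_instance
  have hterm : ∀ n, AEStronglyMeasurable (fun σ => inner ℝ (sinLp n) φ * (Real.exp (-(lamb n * (t - σ))) * inner ℝ (sinLp n) (r σ))) (volume.restrict (uIoc s t)) := by
    intro n
    refine AEStronglyMeasurable.const_mul ?_ _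
    refine AEStronglyMeasurable.mul (by fun_prop) ?_
    exact hr.1.const_inner
  have htend : ∀ᵐ σ, σ ∈ uIoc s t → 0 ≤ Fi σ ∧ Tendsto (fun N => F N σ) atTop (𝓝 (Fi σ)) := by
    have hne : ∀ᵐ σ : ℝ, σ ≠ t := by simp [ae_iff, measure_singleton]
    filter_upwards [ae_interval (r_nonneg hb hω h hnn) hs hst, hne] with σ h1 h2 hσ
    have hlt : σ < t := by
      have h3 := hσ
      rw [uIoc_of_le hst.le] at h3
      exact lt_of_le_of_ne h3.2 h2
    obtain ⟨gs, g1, g2, -⟩ := heat_exists (sub_pos.2 hlt) φ hφ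
    have h4 : HasSum (fun n => inner ℝ (sinLp n) φ * (Real.exp (-(lamb n * (t - σ))) * inner ℝ (sinLp n) (r σ))) (inner ℝ gs (r σ)) := by
      refine hasSum_congr2 (hasSum_basis gs (r σ)) (fun n => ?_) rfl
      rw [g1]; ring
    have h5 : Fi σ = inner ℝ gs (r σ) := h4.tsum_eq
    rw [h5]
    exact ⟨inner_L2_nonneg g2 (h1 hσ), h4.tendsto_sum_nat⟩
  have hbound : ∀ N, ∀ᵐ σ, σ ∈ uIoc s t → ‖F N σ‖ ≤ (‖φ‖^2 + ‖r σ‖^2)/2 := by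
    intro N
    refine Eventually.of_forall fun σ hσ => ?_
    rw [uIoc_of_le hst.le] at hσ
    refine bessel_bound φ (r σ) _ (fun n => ?_) N
    rw [abs_of_pos (Real.exp_pos _), Real.exp_le_one_iff, neg_nonpos]
    exact mul_nonneg (lamb_pos n).le (by linarith [hσ.2])
  have hdom := intervalIntegral.tendsto_integral_filter_of_dominated_convergence (μ := volume) (a := s) (b := t) (l := atTop)
    (F := F) (f := Fi) (fun σ => (‖φ‖^2 + ‖r σ‖^2)/2)
    (Eventually.of_forall fun N => Finset.aestronglyMeasurable_fun_sum _ fun n _ => hterm n)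
    (Eventually.of_forall hbound)
    (by
      rw [intervalIntegrable_iff]
      refine Integrable.div_const (Integrable.add (integrable_const _) ?_) _
      exact hr.integrable_norm_pow (by norm_num))
    (htend.mono fun σ h1 h2 => (h1 h2).2)
  have hnonneg : 0 ≤ ∫ σ in s..t, Fi σ := by
    rw [intervalIntegral.integral_of_le hst.le]
    apply integral_nonneg_of_ae
    rw [EventuallyLE, ae_restrict_iff' measurableSet_Ioc]
    filter_upwards [htend] with σ h1 h2
    exact (h1 (by rwa [uIoc_of_le hst.le])).1
  have hval : ∀ N, ∫ σ in s..t, F N σ = ∑ n ∈ Finset.range N, (inner ℝ (sinLp n) φ * inner ℝ (sinLp n) (u t) - inner ℝ (sinLp n) g * inner ℝ (sinLp n) (u s)) := by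
    intro N
    rw [hF]
    simp only
    rw [intervalIntegral.integral_finsetSum]
    · refine Finset.sum_congr rfl fun n _ => ?_
      rw [intervalIntegral.integral_const_mul, coeff_duhamel h hs hst, hg]; ring
    · intro n _
      rw [intervalIntegrable_iff]
      have hi : IntegrableOn r (uIoc s t) volume := hr.integrable (by norm_num)
      refine (hi.norm.const_mul |inner ℝ (sinLp n) φ|).mono' (hterm n) ?_
      rw [ae_restrict_iff' measurableSet_uIoc]
      refine Eventually.of_forall fun σ hσ => ?_
      rw [uIoc_of_le hst.le] at hσ
      rw [norm_mul, norm_mul, Real.norm_eq_abs, Real.norm_eq_abs, Real.norm_eq_abs]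
      refine mul_le_mul_of_nonneg_left ?_ (abs_nonneg _)
      have h1 : |Real.exp (-(lamb n * (t - σ)))| ≤ 1 := by
        rw [abs_of_pos (Real.exp_pos _), Real.exp_le_one_iff, neg_nonpos]
        exact mul_nonneg (lamb_pos n).le (by linarith [hσ.2])
      exact (mul_le_of_le_one_left (abs_nonneg _) h1).trans (abs_coeff_le n (r σ))
  have hlim := ((hasSum_basis φ (u t)).sub (hasSum_basis g (u s))).tendsto_sum_nat
  simp_rw [hval] at hdom
  have := tendsto_nhds_unique hlim hdom
  linarith

lemma strong_pos {b ω : ℝ} (hb : 0 < b) (hω : 0 ≤ ω) {u r u' uxx : ℝ → Hsp}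
    (h : IsStrongSolutionWith (fun _ => b) (fun _ => ω) 0 u r u' uxx) (hnn : NonnegOn u 0)
    {s t : ℝ} (hs : 0 < s) (hst : s < t) (hne : u s ≠ 0) : ∀ᵐ x ∂μ01, 0 < u t x := by
  set S : Set ℝ := {x | u t x = 0} with hS
  have hSm : MeasurableSet S := (Lp.stronglyMeasurable (u t)).measurable (measurableSet_singleton 0)
  have hfin : μ01 S ≠ ⊤ := measure_ne_top _ _
  set φ : Hsp := indicatorConstLp 2 hSm hfin (1:ℝ) with hφd
  have hφ := indicatorConstLp_coeFn (p := 2) (hs := hSm) (hμs := hfin) (c := (1:ℝ))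
  have hφ0 : ∀ᵐ x ∂μ01, 0 ≤ φ x := by
    filter_upwards [hφ] with x hx
    rw [hφd, hx]; exact indicator_nonneg (fun _ _ => zero_le_one) x
  have hin : inner ℝ φ (u t) = 0 := by
    rw [inner_L2]
    apply integral_eq_zero_of_ae
    filter_upwards [hφ] with x hx
    rw [hφd, hx]
    by_cases hxS : x ∈ S
    · have : u t x = 0 := hxS
      simp [this]
    · simp [hxS]
  have hz : φ = 0 := by
    by_contra hφne
    obtain ⟨g, g1, g2, g3⟩ := heat_exists (sub_pos.2 hst) φ hφ0
    have hle := duhamel_ge hb hω h hnn hs hst φ g hφ0 g1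
    have hus := hnn s hs.le
    have h0 : inner ℝ g (u s) = 0 := le_antisymm (hle.trans hin.le) (inner_L2_nonneg g2 hus)
    rw [inner_L2, integral_eq_zero_iff_of_nonneg_ae] at h0
    · apply hne
      rw [Lp.ext_iff]
      filter_upwards [h0, g3 hφne, Lp.coeFn_zero ℝ 2 μ01] with x a1 a2 a3
      rw [a3]
      exact (mul_eq_zero.1 a1).resolve_left a2.ne'
    · filter_upwards [g2, hus] with x a1 a2 using mul_nonneg a1 a2
    · exact (L2.integrable_inner (𝕜 := ℝ) g (u s)).congr (Eventually.of_forall fun x => by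
        simp only [RCLike.inner_apply, conj_trivial]; ring)
  filter_upwards [hφ, Lp.coeFn_zero ℝ 2 μ01, hnn t (hs.trans hst).le] with x h1 h2 h3
  refine lt_of_le_of_ne h3 fun h4 => ?_
  rw [← hφd, hz, h2] at h1
  have : x ∈ S := h4.symm
  simp [this] at h1

lemma stationary_exists (b ω : ℝ) (hω : 0 ≤ ω) (hωπ : ω < Real.pi ^ 2) :
    ∃ W W' : ℝ → ℝ, ContDiff ℝ (⊤ : ℕ∞) W ∧ W 0 = 0 ∧ W 1 = 0 ∧ (∀ x, HasDerivAt W (W' x) x) ∧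
      ∀ x, HasDerivAt W' (-(ω * W x) - b) x := by
  rcases hω.eq_or_lt with h0 | h0
  · subst h0
    refine ⟨fun x => b / 2 * (x - x^2), fun x => b / 2 * (1 - 2 * x), by fun_prop, by simp, by simp, fun x => ?_, fun x => ?_⟩
    · have := ((hasDerivAt_id x).sub ((hasDerivAt_id x).pow 2)).const_mul (b/2)
      refine this.congr_deriv ?_
      simp
    · have := ((hasDerivAt_const x (1:ℝ)).sub ((hasDerivAt_id x).const_mul 2)).const_mul (b/2)
      refine this.congr_deriv ?_
      simp
  · set k := √ω with hk
    have hk2 : k^2 = ω := Real.sq_sqrt hω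
    have hkpos : 0 < k := Real.sqrt_pos.2 h0
    have hkpi : k < Real.pi := by
      rw [← hk2] at hωπ
      exact lt_of_pow_lt_pow_left₀ 2 Real.pi_pos.le hωπ
    have hc : 0 < Real.cos (k/2) := Real.cos_pos_of_mem_Ioo ⟨by linarith, by linarith⟩
    set c := Real.cos (k/2) with hcd
    refine ⟨fun x => b/ω * (Real.cos (k * (x - 1/2)) / c - 1), fun x => b/ω * (-(k * Real.sin (k * (x - 1/2))) / c),
      by fun_prop, ?_, ?_, fun x => ?_, fun x => ?_⟩
    · have : Real.cos (k * (0 - 1/2)) = c := by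
        rw [hcd, ← Real.cos_neg]; congr 1; ring
      simp only [this, div_self hc.ne', sub_self, mul_zero]
    · have : Real.cos (k * (1 - 1/2)) = c := by
        rw [hcd]; congr 1; ring
      simp only [this, div_self hc.ne', sub_self, mul_zero]
    · have := ((((((hasDerivAt_id x).sub_const (1/2)).const_mul k).cos).div_const c).sub_const 1).const_mul (b/ω)
      refine this.congr_deriv ?_
      simp only [id]; ring
    · have := (((((((hasDerivAt_id x).sub_const (1/2)).const_mul k).sin).const_mul k).neg).div_const c).const_mul (b/ω)
      refine this.congr_deriv ?_
      simp only [id, ← hk2]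
      field_simp
      ring

def oneLp : Hsp := (memLp_of_cont (f := fun _ => (1:ℝ)) continuous_const).toLp

lemma oneLp_coe : ∀ᵐ x ∂μ01, oneLp x = 1 := by
  filter_upwards [(memLp_of_cont (f := fun _ => (1:ℝ)) continuous_const).coeFn_toLp] with x hx using hx

lemma stationary_coeff {b ω : ℝ} {W W' : ℝ → ℝ} (hWc : Continuous W) (h0 : W 0 = 0) (h1 : W 1 = 0)
    (hW : ∀ x, HasDerivAt W (W' x) x) (hW' : ∀ x, HasDerivAt W' (-(ω * W x) - b) x) (n : ℕ) :
    (lamb n - ω) * inner ℝ (sinLp n) (memLp_of_cont hWc).toLp = b * inner ℝ (sinLp n) oneLp := by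
  set WL : Hsp := (memLp_of_cont hWc).toLp with hWL
  have hco := (memLp_of_cont hWc).coeFn_toLp
  have hw : ∀ᵐ x ∂μ01, (-(ω • WL) - b • oneLp : Hsp) x = -(ω * W x) - b := by
    filter_upwards [hco, oneLp_coe, Lp.coeFn_sub (-(ω • WL)) (b • oneLp), Lp.coeFn_neg (ω • WL),
      Lp.coeFn_smul ω WL, Lp.coeFn_smul b oneLp] with x a1 a2 a3 a4 a5 a6
    rw [a3, Pi.sub_apply, a4, Pi.neg_apply, a5, a6, Pi.smul_apply, Pi.smul_apply, a2, hWL, a1]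
    simp
  have hdom : InDomainA WL (-(ω • WL) - b • oneLp) := by
    refine ⟨W, hWc.continuousOn, h0, h1, ?_, W', fun x _ => hW x, fun x hx y hy => ?_⟩
    · filter_upwards [hco] with x hx using hx.symm
    · have e : ∫ z in y..x, (-(ω • WL) - b • oneLp : Hsp) z = ∫ z in y..x, (-(ω * W z) - b) := by
        apply intervalIntegral.integral_congr_ae
        have hw2 := (ae_restrict_iff' (μ := volume) measurableSet_Ioo).1 hw
        filter_upwards [hw2] with z hz hz2
        apply hz
        exact (ordConnected_Ioo.uIcc_subset hy hx) (uIoc_subset_uIcc hz2)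
      rw [e, intervalIntegral.integral_eq_sub_of_hasDerivAt (fun z _ => hW' z)]
      apply Continuous.intervalIntegrable; fun_prop
  have := domA_coeff hdom n
  rw [inner_sub_right, inner_neg_right, inner_smul_right, inner_smul_right] at this
  linarith

lemma coeff_decay {b ω : ℝ} {u r u' uxx : ℝ → Hsp}
    (h : IsStrongSolutionWith (fun _ => b) (fun _ => ω) 0 u r u' uxx) 
    {s t : ℝ} (hs : 0 < s) (hst : s < t) (hpos : ∀ σ, s < σ → ∀ᵐ x ∂μ01, 0 < u σ x) (n : ℕ) (Wn : ℝ)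
    (hWn : (lamb n - ω) * Wn = b * inner ℝ (sinLp n) oneLp) :
    inner ℝ (sinLp n) (u t) - Wn = Real.exp (-((lamb n - ω) * (t - s))) * (inner ℝ (sinLp n) (u s) - Wn) := by
  have h1 := (coeff_fund h hs hst n (lamb n - ω)).2 Wn
  have e : ∫ σ in s..t, (inner ℝ (sinLp n) (u' σ) * Real.exp ((lamb n - ω) * σ) + (inner ℝ (sinLp n) (u σ) - Wn) * ((lamb n - ω) * Real.exp ((lamb n - ω) * σ))) = ∫ σ in s..t, (0:ℝ) := by
    apply intervalIntegral.integral_congr_ae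
    filter_upwards [ae_interval h.eq hs hst, ae_interval h.dom hs hst, ae_interval h.sel hs hst] with σ h2 h3 h4 hσ
    have hσ' := hσ
    rw [uIoc_of_le hst.le] at hσ'
    have hr : r σ = b • oneLp + ω • u σ := by
      rw [Lp.ext_iff]
      filter_upwards [r_eq_of_pos (h4 hσ) (hpos σ hσ'.1), oneLp_coe, Lp.coeFn_add (b • oneLp) (ω • u σ),
        Lp.coeFn_smul b oneLp, Lp.coeFn_smul ω (u σ)] with x a1 a2 a3 a4 a5
      rw [a1, a3, Pi.add_apply, a4, a5, Pi.smul_apply, Pi.smul_apply, a2]; simp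
    rw [h2 hσ, inner_add_right, domA_coeff (h3 hσ) n, hr, inner_add_right, inner_smul_right, inner_smul_right, ← hWn]
    ring
  rw [e, intervalIntegral.integral_zero] at h1
  have h4 : Real.exp (-((lamb n - ω) * t)) * Real.exp ((lamb n - ω) * t) = 1 := by rw [← Real.exp_add]; simp
  rw [show -((lamb n - ω) * (t - s)) = -((lamb n - ω) * t) + (lamb n - ω) * s by ring, Real.exp_add]
  linear_combination (-(inner ℝ (sinLp n) (u t) - Wn)) * h4 - Real.exp (-((lamb n - ω) * t)) * h1

theorem main_aux
    (b ω : ℝ) (hb : 0 < b) (hω : 0 ≤ ω) (hωπ : ω < Real.pi ^ 2)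
    (𝒜 : Set Hsp) (hattr : IsGlobalAttractorPlus b ω 𝒜) :
    ∀ v ∈ 𝒜, ∃ vt : ℝ → ℝ,
      ContDiffOn ℝ (⊤ : ℕ∞) vt (Icc (0:ℝ) 1) ∧ ∀ᵐ x ∂μ01, vt x = v x := by
  intro v hv
  rw [← hattr.invariant 1 zero_le_one] at hv
  obtain ⟨u, -, ⟨r, u', uxx, h⟩, hnn, rfl⟩ := hv
  by_cases hz : u 1 = 0
  · refine ⟨fun _ => 0, contDiffOn_const, ?_⟩
    rw [hz]
    filter_upwards [Lp.coeFn_zero ℝ 2 μ01] with x hx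
    rw [hx]; rfl
  have hca : ContinuousAt u 1 := h.cont.continuousAt (Ici_mem_nhds one_pos)
  obtain ⟨s, hsne, hs0, hs1⟩ : ∃ s, u s ≠ 0 ∧ 0 < s ∧ s < 1 := by
    have h1 : ∀ᶠ s in 𝓝[<] (1:ℝ), u s ≠ 0 := nhdsWithin_le_nhds (hca.eventually_ne hz)
    have h2 : ∀ᶠ s in 𝓝[<] (1:ℝ), 0 < s := nhdsWithin_le_nhds (lt_mem_nhds one_pos)
    exact (h1.and (h2.and self_mem_nhdsWithin)).exists
  obtain ⟨W, W', hWs, hW0, hW1, hW, hW'⟩ := stationary_exists b ω hω hωπ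
  set WL : Hsp := (memLp_of_cont hWs.continuous).toLp with hWL
  have hdec : ∀ n, inner ℝ (sinLp n) (u 1 - WL) = Real.exp (-((lamb n - ω) * (1 - s))) * inner ℝ (sinLp n) (u s - WL) := by
    intro n
    rw [inner_sub_right, inner_sub_right]
    exact coeff_decay h hs0 hs1 (fun σ hσ => strong_pos hb hω h hnn hs0 hσ hsne) n _
      (stationary_coeff hWs.continuous hW0 hW1 hW hW' n)
  set q := Real.exp (-(Real.pi^2*(1-s))) with hq
  set C := Real.exp (ω * (1-s)) * ‖u s - WL‖ with hC
  have hq1 : q < 1 := exp_q (sub_pos.2 hs1)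
  have hbd : ∀ n, |inner ℝ (sinLp n) (u 1 - WL)| ≤ C * q^((n+1)^2) := by
    intro n
    rw [hdec, abs_mul, abs_of_pos (Real.exp_pos _), hq, ← exp_lamb,
      show -((lamb n - ω) * (1 - s)) = ω * (1-s) + -(lamb n * (1-s)) by ring, Real.exp_add, hC]
    have := abs_coeff_le n (u s - WL)
    calc _ ≤ Real.exp (ω * (1-s)) * Real.exp (-(lamb n * (1-s))) * ‖u s - WL‖ := by gcongr
      _ = _ := by ring
  have hsum : Summable fun n => |inner ℝ (sinLp n) (u 1 - WL)| := by
    refine Summable.of_nonneg_of_le (fun _ => abs_nonneg _) hbd ?_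
    have := (summable_q 0 (Real.exp_pos _) hq1).mul_left C
    simpa using this
  refine ⟨fun x => W x + ∑' n, inner ℝ (sinLp n) (u 1 - WL) * sinf n x,
    (hWs.add (series_smooth (Real.exp_pos _) hq1 hbd)).contDiffOn, ?_⟩
  filter_upwards [series_repr _ hsum, Lp.coeFn_sub (u 1) WL, (memLp_of_cont hWs.continuous).coeFn_toLp] with x a1 a2 a3
  rw [a1, a2, Pi.sub_apply, hWL, a3]; ring

end Helpers

/-- in the autonomous case with `ω < π²`, the global attractor
`𝒜⁺` of the semiflow of non-negative solutions consists of `C^∞` functions on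
`[0,1]`. -/
theorem statement11
    (b ω : ℝ) (hb : 0 < b) (hω : 0 ≤ ω) (hωπ : ω < Real.pi ^ 2)
    (𝒜 : Set Hsp) (hattr : IsGlobalAttractorPlus b ω 𝒜) :
    ∀ v ∈ 𝒜, ∃ vt : ℝ → ℝ,
      ContDiffOn ℝ (⊤ : ℕ∞) vt (Icc (0:ℝ) 1) ∧ ∀ᵐ x ∂μ01, vt x = v x := by
  exact main_aux b ω hb hω hωπ 𝒜 hattr

end
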